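/- Let F be an iterated function system on ℝ^d with uniform contraction ratio λ and uniform rotation, with Garsia entropy h_F and splitting rate M_F, and suppose 1 < M_F < ∞. If (d·log M_F − h_F)·(log M_F)² < (1/27)·(log M_F − log λ⁻¹)³·λ⁴, then the self-similar measure μ_F is absolutely continuous with respect to Lebesgue measure on ℝ^d. -/

import Mathlib

open MeasureTheory Real

/-- An iterated function system on `ℝ^d` with uniform contraction ratio and uniform rotation:
maps `S_i (x) = λ U x + a_i` with weights `p_i > 0`. -/
structure UIFS (d : ℕ) where
  m : ℕ
  hm : 0 < m
  lam : ℝ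
  hlam : lam ∈ Set.Ioo (0 : ℝ) 1
  U : EuclideanSpace ℝ (Fin d) ≃ₗᵢ[ℝ] EuclideanSpace ℝ (Fin d)
  a : Fin m → EuclideanSpace ℝ (Fin d)
  p : Fin m → ℝ
  hp : ∀ i, 0 < p i
  hsum : ∑ i, p i = 1

namespace UIFS

variable {d : ℕ} (F : UIFS d)

/-- The map `S_i : x ↦ λ U x + a_i`. -/
noncomputable def S (i : Fin F.m) (x : EuclideanSpace ℝ (Fin d)) : EuclideanSpace ℝ (Fin d) :=
  F.lam • F.U x + F.a i

/-- `S_{j 0} ∘ ⋯ ∘ S_{j (k-1)} (0) = ∑_t λ^t U^t a_{j t}`. -/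
noncomputable def pt {k : ℕ} (j : Fin k → Fin F.m) : EuclideanSpace ℝ (Fin d) :=
  ∑ t : Fin k, F.lam ^ (t : ℕ) • (F.U ^ (t : ℕ)) (F.a (j t))

/-- The `k`-step support `V_{F,k}`. -/
noncomputable def V (k : ℕ) : Set (EuclideanSpace ℝ (Fin d)) :=
  Set.range (fun j : Fin k → Fin F.m => F.pt j)

/-- The separation `Δ_{F,k}` of `F` after `k` steps. -/
noncomputable def sep (k : ℕ) : ℝ :=
  sInf {e : ℝ | ∃ x ∈ F.V k, ∃ y ∈ F.V k, x ≠ y ∧ e = dist x y}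

/-- The splitting rate `M_F = limsup_k Δ_{F,k}^{-1/k}` (as an extended real). -/
noncomputable def splittingRate : ENNReal :=
  Filter.limsup (fun k : ℕ => ENNReal.ofReal (F.sep k) ^ (-(1 : ℝ) / k)) Filter.atTop

/-- The probability that the `k`-step random point equals `x`. -/
noncomputable def weight (k : ℕ) (x : EuclideanSpace ℝ (Fin d)) : ℝ :=
  letI := Classical.decEq (EuclideanSpace ℝ (Fin d))
  ∑ j : Fin k → Fin F.m, if F.pt j = x then ∏ t, F.p (j t) else 0

/-- The Shannon entropy `h_{F,k} = H(∑_{t<k} λ^t U^t X_t)`. -/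
noncomputable def Hk (k : ℕ) : ℝ :=
  letI := Classical.decEq (EuclideanSpace ℝ (Fin d))
  ∑ x ∈ Finset.image (fun j : Fin k → Fin F.m => F.pt j) Finset.univ,
    Real.negMulLog (F.weight k x)

/-- The Garsia entropy `h_F = liminf_k h_{F,k}/k`. -/
noncomputable def garsiaEntropy : ℝ :=
  Filter.liminf (fun k : ℕ => F.Hk k / k) Filter.atTop

end UIFS

open MeasureTheory Real
open scoped BoundedContinuousFunction

set_option linter.unusedSectionVars false

section OpPart
variable {E : Type*} [NormedAddCommGroup E] [InnerProductSpace ℝ E] [FiniteDimensional ℝ E]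
  [MeasurableSpace E] [BorelSpace E]

lemma bcf_integrable (ρ : Measure E) [IsProbabilityMeasure ρ] (φ : E →ᵇ ℝ) (x : E) :
    Integrable (fun u => φ (x + u)) ρ := by
  refine Integrable.of_bound (C := ‖φ‖) ?_ ?_
  · exact (φ.continuous.comp (continuous_const.add continuous_id)).aestronglyMeasurable
  · exact Filter.Eventually.of_forall fun u => φ.norm_coe_le_norm _

noncomputable def Tfun (ρ : Measure E) [IsProbabilityMeasure ρ] (φ : E →ᵇ ℝ) : E →ᵇ ℝ :=
  BoundedContinuousFunction.ofNormedAddCommGroup (fun x => ∫ u, φ (x + u) ∂ρ)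
    (by
      refine continuous_of_dominated (bound := fun _ => ‖φ‖) ?_ ?_ (integrable_const _) ?_
      · intro x
        exact (bcf_integrable ρ φ x).aestronglyMeasurable
      · intro x
        exact Filter.Eventually.of_forall fun u => φ.norm_coe_le_norm _
      · exact Filter.Eventually.of_forall fun u =>
          φ.continuous.comp (continuous_id.add continuous_const)) ‖φ‖
    (by
      intro x
      refine (norm_integral_le_of_norm_le_const (C := ‖φ‖)
        (Filter.Eventually.of_forall fun u => φ.norm_coe_le_norm _)).trans ?_
      simp)

/-- the Banach algebra of operators on bounded continuous functions -/
def OpB (E : Type*) [NormedAddCommGroup E] := (E →ᵇ ℝ) →L[ℝ] (E →ᵇ ℝ)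

noncomputable instance : NormedRing (OpB E) :=
  inferInstanceAs (NormedRing ((E →ᵇ ℝ) →L[ℝ] (E →ᵇ ℝ)))

/-- application of an operator -/
noncomputable def OpB.app (A : OpB E) (φ : E →ᵇ ℝ) : E →ᵇ ℝ :=
  (show (E →ᵇ ℝ) →L[ℝ] (E →ᵇ ℝ) from A) φ

lemma OpB.mul_app (A B : OpB E) (φ : E →ᵇ ℝ) : (A * B).app φ = A.app (B.app φ) := rfl
lemma OpB.sub_app (A B : OpB E) (φ : E →ᵇ ℝ) (x : E) :
    (A - B).app φ x = A.app φ x - B.app φ x := rfl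
lemma OpB.one_app (φ : E →ᵇ ℝ) : (1 : OpB E).app φ = φ := rfl
lemma OpB.ext' {A B : OpB E} (h : ∀ φ x, A.app φ x = B.app φ x) : A = B :=
  ContinuousLinearMap.ext fun φ => BoundedContinuousFunction.ext fun x => h φ x
lemma OpB.norm_le_bound (A : OpB E) {C : ℝ} (hC : 0 ≤ C)
    (h : ∀ φ x, ‖A.app φ x‖ ≤ C * ‖φ‖) : ‖A‖ ≤ C := by
  refine ContinuousLinearMap.opNorm_le_bound _ hC fun φ => ?_
  exact (BoundedContinuousFunction.norm_le (by positivity)).2 fun x => h φ x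
lemma OpB.app_le (A : OpB E) (φ : E →ᵇ ℝ) (x : E) : ‖A.app φ x‖ ≤ ‖A‖ * ‖φ‖ := by
  refine (BoundedContinuousFunction.norm_coe_le_norm _ _).trans ?_
  exact ContinuousLinearMap.le_opNorm (show (E →ᵇ ℝ) →L[ℝ] (E →ᵇ ℝ) from A) φ

/-- Convolution operator, auxiliary. -/
noncomputable def CopAux (ρ : Measure E) [IsProbabilityMeasure ρ] : OpB E :=
    LinearMap.mkContinuous
      { toFun := fun φ => Tfun ρ φ
        map_add' := by
          intro φ ψ
          ext x
          simp only [Tfun, BoundedContinuousFunction.coe_ofNormedAddCommGroup,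
            BoundedContinuousFunction.coe_add, Pi.add_apply]
          exact integral_add (bcf_integrable ρ φ x) (bcf_integrable ρ ψ x)
        map_smul' := by
          intro c φ
          ext x
          simp only [Tfun, BoundedContinuousFunction.coe_ofNormedAddCommGroup,
            BoundedContinuousFunction.coe_smul, RingHom.id_apply, smul_eq_mul]
          exact integral_const_mul _ _ } 1
      (by
        intro φ
        simp only [LinearMap.coe_mk, AddHom.coe_mk, one_mul]
        exact BoundedContinuousFunction.norm_ofNormedAddCommGroup_le _ (norm_nonneg _) _)

open Classical in
/-- Convolution operator. -/
noncomputable def Cop (ρ : Measure E) : OpB E :=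
  if h : IsProbabilityMeasure ρ then CopAux ρ else 0

lemma Cop_apply (ρ : Measure E) [h : IsProbabilityMeasure ρ] (φ : E →ᵇ ℝ) (x : E) :
    (Cop ρ).app φ x = ∫ u, φ (x + u) ∂ρ := by
  unfold Cop
  rw [dif_pos h]
  rfl

lemma Cop_norm_le (ρ : Measure E) : ‖Cop ρ‖ ≤ 1 := by
  unfold Cop
  split_ifs with h
  · exact LinearMap.mkContinuous_norm_le _ zero_le_one _
  · exact norm_zero.trans_le zero_le_one

lemma Cop_conv (ρ ρ' : Measure E) [IsProbabilityMeasure ρ] [IsProbabilityMeasure ρ'] :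
    Cop (ρ.conv ρ') = Cop ρ * Cop ρ' := by
  refine OpB.ext' fun φ x => ?_
  rw [OpB.mul_app, Cop_apply, Cop_apply, integral_conv (bcf_integrable _ φ x)]
  refine integral_congr_ae (Filter.Eventually.of_forall fun u => ?_)
  simp only [Cop_apply, add_assoc]

lemma Cop_comm (ρ ρ' : Measure E) [IsProbabilityMeasure ρ] [IsProbabilityMeasure ρ'] :
    Cop ρ * Cop ρ' = Cop ρ' * Cop ρ := by
  rw [← Cop_conv, ← Cop_conv, Measure.conv_comm]

lemma Cop_dirac (z : E) (φ : E →ᵇ ℝ) (x : E) : (Cop (Measure.dirac z)).app φ x = φ (x + z) := by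
  rw [Cop_apply, integral_dirac]

lemma Cop_dirac_zero : Cop (Measure.dirac (0 : E)) = 1 := by
  refine OpB.ext' fun φ x => ?_
  simp [Cop_dirac, OpB.one_app]

/-- composition operator -/
noncomputable def compOp (L : E ≃L[ℝ] E) : OpB E :=
  LinearMap.mkContinuous
    { toFun := fun φ => φ.compContinuous ⟨L, L.continuous⟩
      map_add' := by intro φ ψ; ext x; rfl
      map_smul' := by intro c φ; ext x; rfl } 1
    (by
      intro φ
      rw [one_mul, BoundedContinuousFunction.norm_le (norm_nonneg _)]
      intro x
      exact φ.norm_coe_le_norm _)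

lemma compOp_apply (L : E ≃L[ℝ] E) (φ : E →ᵇ ℝ) (x : E) : (compOp L).app φ x = φ (L x) := rfl

lemma compOp_norm_le (L : E ≃L[ℝ] E) : ‖compOp L‖ ≤ 1 :=
  LinearMap.mkContinuous_norm_le _ zero_le_one _

lemma compOp_symm_mul (L : E ≃L[ℝ] E) : compOp L.symm * compOp L = 1 := by
  refine OpB.ext' fun φ x => ?_
  simp [OpB.mul_app, OpB.one_app, compOp_apply]

lemma compOp_mul_symm (L : E ≃L[ℝ] E) : compOp L * compOp L.symm = 1 := by
  refine OpB.ext' fun φ x => ?_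
  simp [OpB.mul_app, OpB.one_app, compOp_apply]

instance map_prob (L : E ≃L[ℝ] E) (ρ : Measure E) [IsProbabilityMeasure ρ] :
    IsProbabilityMeasure (ρ.map L) :=
  Measure.isProbabilityMeasure_map L.continuous.measurable.aemeasurable

lemma Cop_map (L : E ≃L[ℝ] E) (ρ : Measure E) [IsProbabilityMeasure ρ] :
    Cop (ρ.map L) = compOp L.symm * Cop ρ * compOp L := by
  refine OpB.ext' fun φ x => ?_
  simp only [OpB.mul_app, compOp_apply, Cop_apply]
  rw [integral_map L.continuous.measurable.aemeasurable
    (bcf_integrable _ φ x).aestronglyMeasurable]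
  simp

/-- conjugation does not increase norms -/
lemma conj_norm_le (L : E ≃L[ℝ] E) (A : OpB E) :
    ‖compOp L.symm * A * compOp L‖ ≤ ‖A‖ := by
  calc _ ≤ ‖compOp L.symm * A‖ * ‖compOp L‖ := norm_mul_le _ _
    _ ≤ (‖compOp L.symm‖ * ‖A‖) * ‖compOp L‖ := by gcongr; exact norm_mul_le _ _
    _ ≤ (1 * ‖A‖) * 1 := by
      gcongr
      · exact compOp_norm_le _
      · exact compOp_norm_le _
    _ = _ := by ring

lemma norm_mul_le_left {R : Type*} [NormedRing R] {a b : R} (ha : ‖a‖ ≤ 1) : ‖a * b‖ ≤ ‖b‖ := by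
  calc _ ≤ ‖a‖ * ‖b‖ := norm_mul_le _ _
    _ ≤ 1 * ‖b‖ := by gcongr
    _ = _ := one_mul _

lemma norm_mul_le_right {R : Type*} [NormedRing R] {a b : R} (hb : ‖b‖ ≤ 1) : ‖a * b‖ ≤ ‖a‖ := by
  calc _ ≤ ‖a‖ * ‖b‖ := norm_mul_le _ _
    _ ≤ ‖a‖ * 1 := by gcongr
    _ = _ := mul_one _

lemma pair_bound (ρ₁ ρ₂ γ : Measure E) [IsProbabilityMeasure ρ₁] [IsProbabilityMeasure ρ₂]
    [IsProbabilityMeasure γ] (hγ : γ.map (fun z => -z) = γ) (n₁ n₂ : E → ℝ)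
    (h₁ : ∀ z, ‖Cop ρ₁ * (Cop (Measure.dirac z) - 1)‖ ≤ n₁ z)
    (h₂ : ∀ z, ‖Cop ρ₂ * (Cop (Measure.dirac z) - 1)‖ ≤ n₂ z)
    (i₁ : Integrable (fun z => n₁ z ^ 2) γ) (i₂ : Integrable (fun z => n₂ z ^ 2) γ)
    (q : ℝ) (hq₁ : ∫ z, n₁ z ^ 2 ∂γ ≤ q) (hq₂ : ∫ z, n₂ z ^ 2 ∂γ ≤ q) :
    ‖Cop ρ₁ * Cop ρ₂ * (Cop γ - 1)‖ ≤ q / 2 := by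
  have hq : 0 ≤ q := le_trans (integral_nonneg fun z => sq_nonneg _) hq₁
  refine OpB.norm_le_bound _ (by positivity) fun φ x => ?_
  have hcomm : Cop ρ₁ * Cop ρ₂ * (Cop γ - 1) = (Cop γ - 1) * (Cop ρ₁ * Cop ρ₂) := by
    rw [mul_sub, sub_mul, mul_one, one_mul, mul_assoc, Cop_comm ρ₂ γ, ← mul_assoc, Cop_comm ρ₁ γ,
      mul_assoc]
  set ψ := (Cop ρ₁ * Cop ρ₂).app φ with hψ
  have e1 : (Cop ρ₁ * Cop ρ₂ * (Cop γ - 1)).app φ x = (∫ z, ψ (x + z) ∂γ) - ψ x := by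
    rw [hcomm, OpB.mul_app, OpB.sub_app, Cop_apply]
    rfl
  have iz : Integrable (fun z => ψ (x + z)) γ := bcf_integrable γ ψ x
  have izn : Integrable (fun z => ψ (x + -z)) γ := by
    have := iz
    rw [← hγ] at this
    exact this.comp_measurable measurable_neg
  have e2 : ∫ z, ψ (x + z) ∂γ = ∫ z, ψ (x + -z) ∂γ := by
    conv_lhs => rw [← hγ]
    rw [integral_map measurable_neg.aemeasurable]
    rw [hγ]
    exact iz.aestronglyMeasurable
  have e3 : (∫ z, ψ (x + z) ∂γ) - ψ x =
      ∫ z, (1/2) * (ψ (x + z) + ψ (x + -z) - 2 * ψ x) ∂γ := by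
    rw [integral_const_mul, integral_sub (f := fun z => ψ (x + z) + ψ (x + -z)) (iz.add izn)
      (integrable_const _), integral_add iz izn, ← e2]
    simp
    ring
  have key : ∀ z, ‖(1/2) * (ψ (x + z) + ψ (x + -z) - 2 * ψ x)‖ ≤
      (1/4) * (n₁ z ^ 2 + n₂ z ^ 2) * ‖φ‖ := by
    intro z
    have a1 : ψ (x + z) + ψ (x + -z) - 2 * ψ x =
        ((Cop (Measure.dirac (-z)) * ((Cop ρ₁ * (Cop (Measure.dirac z) - 1)) *
          (Cop ρ₂ * (Cop (Measure.dirac z) - 1)))).app φ) x := by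
      have a2 : Cop (Measure.dirac (-z)) * ((Cop ρ₁ * (Cop (Measure.dirac z) - 1)) *
          (Cop ρ₂ * (Cop (Measure.dirac z) - 1))) =
          (Cop (Measure.dirac (-z)) * ((Cop (Measure.dirac z) - 1) *
          (Cop (Measure.dirac z) - 1))) * (Cop ρ₁ * Cop ρ₂) := by
        have c1 : ∀ ρ : Measure E, IsProbabilityMeasure ρ → 
            Cop ρ * (Cop (Measure.dirac z) - 1) = (Cop (Measure.dirac z) - 1) * Cop ρ := by
          intro ρ hρ
          rw [mul_sub, sub_mul, Cop_comm, mul_one, one_mul]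
        rw [c1 ρ₁ inferInstance, mul_assoc _ (Cop ρ₁), ← mul_assoc (Cop ρ₁), mul_assoc (Cop ρ₁),
          c1 ρ₂ inferInstance, ← mul_assoc (Cop ρ₁), c1 ρ₁ inferInstance]
        simp only [mul_assoc]
      rw [a2, OpB.mul_app, ← hψ]
      simp only [OpB.mul_app, Cop_dirac, OpB.sub_app, OpB.one_app]
      have : x + -z + z = x := by abel
      rw [this]
      ring
    rw [norm_mul, a1]
    have b1 : ‖((Cop (Measure.dirac (-z)) * ((Cop ρ₁ * (Cop (Measure.dirac z) - 1)) *
          (Cop ρ₂ * (Cop (Measure.dirac z) - 1)))).app φ) x‖ ≤ (n₁ z * n₂ z) * ‖φ‖ := by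
      refine (OpB.app_le _ _ _).trans ?_
      gcongr
      refine (norm_mul_le_left (Cop_norm_le _)).trans ?_
      refine (norm_mul_le _ _).trans ?_
      exact mul_le_mul (h₁ z) (h₂ z) (norm_nonneg _) ((norm_nonneg _).trans (h₁ z))
    have b2 : n₁ z * n₂ z ≤ (n₁ z ^ 2 + n₂ z ^ 2) / 2 := by nlinarith [sq_nonneg (n₁ z - n₂ z)]
    have b3 := mul_le_mul_of_nonneg_right b2 (norm_nonneg φ)
    have : ‖(1/2 : ℝ)‖ = 1/2 := by norm_num
    rw [this]
    linarith
  rw [e1, e3]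
  refine (norm_integral_le_of_norm_le (((i₁.add i₂).const_mul (1/4)).mul_const ‖φ‖)
    (Filter.Eventually.of_forall key)).trans ?_
  rw [integral_mul_const, integral_const_mul]
  simp only [Pi.add_apply]
  rw [integral_add i₁ i₂]
  gcongr
  linarith
end OpPart

open MeasureTheory Real
open scoped BoundedContinuousFunction
set_option linter.unusedSectionVars false

section GauPart
variable {E : Type*} [NormedAddCommGroup E] [InnerProductSpace ℝ E] [FiniteDimensional ℝ E]
  [MeasurableSpace E] [BorelSpace E]

/-- Gaussian density with variance `y`. -/
noncomputable def gau (y : ℝ) (x : E) : ℝ :=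
  (2 * π * y) ^ (-(Module.finrank ℝ E : ℝ) / 2) * exp (-(1 / (2 * y)) * ‖x‖ ^ 2)

lemma gau_pos {y : ℝ} (hy : 0 < y) (x : E) : 0 < gau y x := by
  unfold gau; positivity

lemma gau_cont (y : ℝ) : Continuous (gau y : E → ℝ) := by
  unfold gau; fun_prop

lemma gau_neg (y : ℝ) (x : E) : gau y (-x) = gau y x := by
  unfold gau; rw [norm_neg]

lemma gau_le {y : ℝ} (hy : 0 < y) (x : E) :
    gau y x ≤ (2 * π * y) ^ (-(Module.finrank ℝ E : ℝ) / 2) := by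
  unfold gau
  have : exp (-(1 / (2 * y)) * ‖x‖ ^ 2) ≤ 1 := by
    rw [exp_le_one_iff]
    have : 0 ≤ (1 / (2 * y)) * ‖x‖ ^ 2 := by positivity
    linarith
  have h2 : 0 ≤ (2 * π * y) ^ (-(Module.finrank ℝ E : ℝ) / 2) := by positivity
  nlinarith

lemma gau_integral {y : ℝ} (hy : 0 < y) : ∫ x : E, gau y x = 1 := by
  unfold gau
  rw [integral_const_mul, GaussianFourier.integral_rexp_neg_mul_sq_norm (by positivity)]
  have : π / (1 / (2 * y)) = 2 * π * y := by field_simp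
  rw [this, ← rpow_add (by positivity)]
  have : -(Module.finrank ℝ E : ℝ) / 2 + (Module.finrank ℝ E : ℝ) / 2 = 0 := by ring
  rw [this, rpow_zero]

lemma gau_integrable {y : ℝ} (hy : 0 < y) : Integrable (gau y : E → ℝ) := by
  by_contra h
  have := integral_undef h
  rw [gau_integral hy] at this
  exact one_ne_zero this

lemma gau_log {y : ℝ} (hy : 0 < y) (x : E) :
    log (gau y x) = -(Module.finrank ℝ E : ℝ) / 2 * log (2 * π * y) - 1 / (2 * y) * ‖x‖ ^ 2 := by
  unfold gau
  rw [log_mul (by positivity) (by positivity), log_exp, log_rpow (by positivity)]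
  ring

lemma gau_mul {y s : ℝ} (hy : 0 < y) (hs : 0 < s) (x z : E) :
    gau y (x - z) * gau s z =
      gau (y + s) x * gau (y * s / (y + s)) (z - (s / (y + s)) • x) := by
  have hys : 0 < y + s := by positivity
  unfold gau
  conv_lhs => rw [mul_mul_mul_comm, ← exp_add, ← mul_rpow (by positivity) (by positivity)]
  conv_rhs => rw [mul_mul_mul_comm, ← exp_add, ← mul_rpow (by positivity) (by positivity)]
  congr 2
  · field_simp
  · rw [@norm_sub_sq_real E, @norm_sub_sq_real E, norm_smul, inner_smul_right, real_inner_comm x z,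
      norm_of_nonneg (by positivity)]
    field_simp
    ring

lemma gau_conv {y s : ℝ} (hy : 0 < y) (hs : 0 < s) (x : E) :
    ∫ z, gau y (x - z) * gau s z = gau (y + s) x := by
  simp_rw [gau_mul hy hs]
  rw [integral_const_mul, integral_sub_right_eq_self (fun z => gau (y * s / (y + s)) z),
    gau_integral (by positivity), mul_one]

lemma gau_conv_integrable {y s : ℝ} (hy : 0 < y) (hs : 0 < s) (x : E) :
    Integrable (fun z => gau y (x - z) * gau s z) := by
  simp_rw [gau_mul hy hs]
  exact ((gau_integrable (by positivity)).comp_sub_right _).const_mul _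

lemma gau_sqrt_mul {y : ℝ} (hy : 0 < y) (x a b : E) :
    sqrt (gau y (x - a) * gau y (x - b)) =
      exp (-(‖a - b‖ ^ 2 / (8 * y))) * gau y (x - (1 / 2 : ℝ) • (a + b)) := by
  rw [sqrt_eq_iff_mul_self_eq (by have := gau_pos hy (x - a); have := gau_pos hy (x - b); positivity)
    (by have := gau_pos hy (x - (1 / 2 : ℝ) • (a + b)); positivity)]
  unfold gau
  have e2 : ∀ k a b : ℝ, k * (a * b) * (k * (a * b)) = (a * a) * ((k * b) * (k * b)) := by
    intros; ring
  rw [e2]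
  conv_lhs => rw [mul_mul_mul_comm, ← exp_add]
  conv_rhs => rw [← exp_add, ← exp_add]
  congr 2
  have h := parallelogram_law_with_norm ℝ ((1 / 2 : ℝ) • (x - a)) ((1 / 2 : ℝ) • (x - b))
  have h1 : (1 / 2 : ℝ) • (x - a) + (1 / 2 : ℝ) • (x - b) = x - (1 / 2 : ℝ) • (a + b) := by
    module
  have h2 : (1 / 2 : ℝ) • (x - a) - (1 / 2 : ℝ) • (x - b) = (-(1 / 2 : ℝ)) • (a - b) := by
    module
  rw [h1, h2, norm_smul, norm_smul, norm_smul, norm_neg] at h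
  have h3 : ‖(1 / 2 : ℝ)‖ = 1 / 2 := by norm_num
  rw [h3] at h
  field_simp
  nlinarith [h]

lemma gau_sqrt {y : ℝ} (hy : 0 < y) (x : E) :
    sqrt (gau y x) = ((2 * π * y) ^ (-(Module.finrank ℝ E : ℝ) / 2)) ^ (1/2 : ℝ) *
      ((2 * π * (2 * y)) ^ (-(Module.finrank ℝ E : ℝ) / 2))⁻¹ * gau (2 * y) x := by
  unfold gau
  rw [sqrt_mul (by positivity), sqrt_eq_rpow]
  have h : (2 * π * (2 * y)) ^ (-(Module.finrank ℝ E : ℝ) / 2) ≠ 0 := by positivity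
  have : sqrt (exp (-(1 / (2 * y)) * ‖x‖ ^ 2)) = exp (-(1 / (2 * (2 * y))) * ‖x‖ ^ 2) := by
    rw [sqrt_eq_iff_mul_self_eq (by positivity) (by positivity), ← exp_add]
    congr 1
    field_simp
    ring
  rw [this]
  field_simp

lemma gau_sqrt_integrable {y : ℝ} (hy : 0 < y) : Integrable (fun x : E => sqrt (gau y x)) := by
  simp_rw [gau_sqrt hy]
  exact (gau_integrable (by positivity)).const_mul _

lemma gau_sq_integrable {y : ℝ} (hy : 0 < y) : Integrable (fun x : E => ‖x‖ ^ 2 * gau y x) := by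
  have h : Integrable (fun x : E => (4 * y * ((2 * π * y) ^ (-(Module.finrank ℝ E : ℝ) / 2) *
      ((2 * π * (2 * y)) ^ (-(Module.finrank ℝ E : ℝ) / 2))⁻¹)) * gau (2 * y) x) :=
    (gau_integrable (by positivity)).const_mul _
  refine h.mono' ?_ ?_
  · exact ((continuous_norm.pow 2).mul (gau_cont y)).aestronglyMeasurable
  · refine Filter.Eventually.of_forall fun x => ?_
    rw [norm_of_nonneg (by have := gau_pos hy x; positivity)]
    unfold gau
    have h : (2 * π * (2 * y)) ^ (-(Module.finrank ℝ E : ℝ) / 2) ≠ 0 := by positivity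
    have h1 : exp (-(1 / (2 * y)) * ‖x‖ ^ 2) =
        exp (-(1 / (2 * (2 * y))) * ‖x‖ ^ 2) * exp (-(1 / (2 * (2 * y))) * ‖x‖ ^ 2) := by
      rw [← exp_add]; congr 1; field_simp; ring
    have h2 : ‖x‖ ^ 2 * exp (-(1 / (2 * (2 * y))) * ‖x‖ ^ 2) ≤ 4 * y := by
      have h3 := add_one_le_exp ((1 / (2 * (2 * y))) * ‖x‖ ^ 2)
      rw [show -(1 / (2 * (2 * y))) * ‖x‖ ^ 2 = -((1 / (2 * (2 * y))) * ‖x‖ ^ 2) by ring, exp_neg,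
        ← div_eq_mul_inv, div_le_iff₀ (exp_pos _)]
      have : ‖x‖ ^ 2 = 4 * y * ((1 / (2 * (2 * y))) * ‖x‖ ^ 2) := by field_simp; ring
      nlinarith
    rw [h1]
    have e : 4 * y * ((2 * π * y) ^ (-(Module.finrank ℝ E : ℝ) / 2) *
      ((2 * π * (2 * y)) ^ (-(Module.finrank ℝ E : ℝ) / 2))⁻¹) * 
      ((2 * π * (2 * y)) ^ (-(Module.finrank ℝ E : ℝ) / 2) * exp (-(1 / (2 * (2 * y))) * ‖x‖ ^ 2))
      = ((2 * π * y) ^ (-(Module.finrank ℝ E : ℝ) / 2) * exp (-(1 / (2 * (2 * y))) * ‖x‖ ^ 2)) *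
       (4 * y) := by field_simp
    rw [e]
    calc _ = ((2 * π * y) ^ (-(Module.finrank ℝ E : ℝ) / 2) * exp (-(1 / (2 * (2 * y))) * ‖x‖ ^ 2)) *
       (‖x‖ ^ 2 * exp (-(1 / (2 * (2 * y))) * ‖x‖ ^ 2)) := by ring
      _ ≤ _ := by gcongr

/-- Gaussian measure. -/
noncomputable def gm (y : ℝ) : Measure E := volume.withDensity fun x => ENNReal.ofReal (gau y x)

lemma gm_prob {y : ℝ} (hy : 0 < y) : IsProbabilityMeasure (gm y : Measure E) := by
  constructor
  rw [gm, withDensity_apply _ MeasurableSet.univ, setLIntegral_univ,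
    ← ofReal_integral_eq_lintegral_ofReal (gau_integrable hy)
      (Filter.Eventually.of_forall fun x => (gau_pos hy x).le), gau_integral hy, ENNReal.ofReal_one]

lemma gm_integral {y : ℝ} (hy : 0 < y) (f : E → ℝ) : ∫ x, f x ∂(gm y) = ∫ x, gau y x * f x := by
  rw [gm, integral_withDensity_eq_integral_toReal_smul (by have := gau_cont (E := E) y; fun_prop)
    (Filter.Eventually.of_forall fun x => ENNReal.ofReal_lt_top)]
  refine integral_congr_ae (Filter.Eventually.of_forall fun x => ?_)
  simp [ENNReal.toReal_ofReal (gau_pos hy x).le]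

lemma gm_integrable {y : ℝ} (hy : 0 < y) (f : E → ℝ) :
    Integrable f (gm y) ↔ Integrable (fun x => gau y x * f x) := by
  rw [gm, integrable_withDensity_iff_integrable_smul' (by have := gau_cont (E := E) y; fun_prop)
    (Filter.Eventually.of_forall fun x => ENNReal.ofReal_lt_top)]
  refine integrable_congr (Filter.Eventually.of_forall fun x => ?_)
  simp [ENNReal.toReal_ofReal (gau_pos hy x).le]

lemma gm_conv {y s : ℝ} (hy : 0 < y) (hs : 0 < s) :
    (gm y : Measure E).conv (gm s) = gm (y + s) := by
  have := gm_prob (E := E) hy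
  have := gm_prob (E := E) hs
  have mm : ∀ t : ℝ, Measurable fun x : E => ENNReal.ofReal (gau t x) := fun t => by
    have := gau_cont (E := E) t; fun_prop
  refine Measure.ext_of_lintegral _ fun f hf => ?_
  rw [Measure.conv_comm, Measure.lintegral_conv hf]
  rw [gm, lintegral_withDensity_eq_lintegral_mul _ (mm s) (by fun_prop)]
  simp only [Pi.mul_apply]
  have e1 : ∀ z : E, ∫⁻ y_1, f (z + y_1) ∂(gm y : Measure E)
      = ∫⁻ x, ENNReal.ofReal (gau y (x - z)) * f x := by
    intro z
    rw [gm, lintegral_withDensity_eq_lintegral_mul _ (mm y) (by fun_prop)]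
    conv_rhs => rw [← lintegral_add_left_eq_self _ z]
    simp
  simp_rw [e1]
  have mm2 : Measurable fun p : E × E => ENNReal.ofReal (gau y (p.2 - p.1)) := by
    have := gau_cont (E := E) y; fun_prop
  have e2 : ∀ z : E, ENNReal.ofReal (gau s z) * ∫⁻ x, ENNReal.ofReal (gau y (x - z)) * f x =
      ∫⁻ x, ENNReal.ofReal (gau s z) * (ENNReal.ofReal (gau y (x - z)) * f x) := by
    intro z
    rw [lintegral_const_mul]
    exact (mm2.comp (measurable_const.prodMk measurable_id)).mul hf
  simp_rw [e2]
  rw [lintegral_lintegral_swap]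
  · rw [gm, lintegral_withDensity_eq_lintegral_mul _ (mm _) (by fun_prop)]
    refine lintegral_congr fun x => ?_
    simp only [Pi.mul_apply]
    rw [← gau_conv hy hs x, ofReal_integral_eq_lintegral_ofReal (gau_conv_integrable hy hs x)
      (Filter.Eventually.of_forall fun z => (mul_pos (gau_pos hy _) (gau_pos hs _)).le),
      ← lintegral_mul_const]
    · refine lintegral_congr fun z => ?_
      rw [ENNReal.ofReal_mul (gau_pos hy _).le]
      ring
    · have := gau_cont (E := E) y
      have := gau_cont (E := E) s
      fun_prop
  · refine Measurable.aemeasurable ?_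
    exact ((mm s).comp measurable_fst).mul (mm2.mul (hf.comp measurable_snd))

lemma gm_neg (y : ℝ) : (gm y : Measure E).map (fun z => -z) = gm y := by
  refine Measure.ext_of_lintegral _ fun f hf => ?_
  have mm : Measurable fun x : E => ENNReal.ofReal (gau y x) := by
    have := gau_cont (E := E) y; fun_prop
  rw [lintegral_map hf measurable_neg, gm, lintegral_withDensity_eq_lintegral_mul _ mm (by fun_prop),
    lintegral_withDensity_eq_lintegral_mul _ mm (by fun_prop)]
  simp only [Pi.mul_apply]
  rw [← lintegral_neg_eq_self]
  simp [gau_neg]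

lemma gm_map {y c : ℝ} (hy : 0 < y) (hc : 0 < c) (L : E ≃L[ℝ] E) (hL : ∀ x, ‖L x‖ = c * ‖x‖) :
    (gm y : Measure E).map L = gm (c ^ 2 * y) := by
  have i1 := gm_prob (E := E) hy
  have i2 := gm_prob (E := E) (y := c ^ 2 * y) (by positivity)
  have mm : ∀ t : ℝ, Measurable fun x : E => ENNReal.ofReal (gau t x) := fun t => by
    have := gau_cont (E := E) t; fun_prop
  obtain ⟨k, hk⟩ : ∃ k : ENNReal, (volume : Measure E).map L = k • volume := by
    have := Measure.map_linearMap_addHaar_eq_smul_addHaar (volume : Measure E)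
      (f := (L : E →ₗ[ℝ] E)) (LinearEquiv.isUnit_det' L.toLinearEquiv).ne_zero
    exact ⟨_, this⟩
  obtain ⟨K, hK⟩ : ∃ K : ENNReal, ∀ x : E, ENNReal.ofReal (gau y (L.symm x)) =
      K * ENNReal.ofReal (gau (c ^ 2 * y) x) := by
    refine ⟨ENNReal.ofReal ((2 * π * y) ^ (-(Module.finrank ℝ E : ℝ) / 2) *
      ((2 * π * (c ^ 2 * y)) ^ (-(Module.finrank ℝ E : ℝ) / 2))⁻¹), fun x => ?_⟩
    rw [← ENNReal.ofReal_mul (by positivity)]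
    congr 1
    have h := hL (L.symm x)
    rw [L.apply_symm_apply] at h
    unfold gau
    have h0 : (2 * π * (c ^ 2 * y)) ^ (-(Module.finrank ℝ E : ℝ) / 2) ≠ 0 := by positivity
    rw [h]
    have : exp (-(1 / (2 * (c ^ 2 * y))) * (c * ‖L.symm x‖) ^ 2) = exp (-(1 / (2 * y)) * ‖L.symm x‖ ^ 2) := by
      congr 1; field_simp
    rw [this]
    field_simp
  have key : (gm y : Measure E).map L = (k * K) • gm (c ^ 2 * y) := by
    refine Measure.ext_of_lintegral _ fun f hf => ?_
    rw [lintegral_map hf L.continuous.measurable, gm, lintegral_withDensity_eq_lintegral_mul _ (mm _)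
      (show Measurable fun a => f (L a) from hf.comp L.continuous.measurable), lintegral_smul_measure, gm,
      lintegral_withDensity_eq_lintegral_mul _ (mm _) hf]
    have e : ∀ x : E, (((fun x => ENNReal.ofReal (gau y x)) * fun a => f (L a)) : E → ENNReal) x =
        (fun u => K * (ENNReal.ofReal (gau (c ^ 2 * y) u) * f u)) (L x) := by
      intro x
      simp only [Pi.mul_apply]
      rw [← mul_assoc, ← hK, L.symm_apply_apply]
    have e' : Measurable (fun u => K * (ENNReal.ofReal (gau (c ^ 2 * y) u) * f u)) := by
      have := mm (c ^ 2 * y); fun_prop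
    rw [lintegral_congr e, ← lintegral_map e' L.continuous.measurable, hk,
      lintegral_smul_measure, lintegral_const_mul _ (by have := mm (c ^ 2 * y); fun_prop)]
    simp [mul_assoc]
  have h1 : k * K = 1 := by
    have := congrArg (fun m : Measure E => m Set.univ) key
    simp only [Measure.smul_apply, measure_univ, smul_eq_mul, mul_one] at this
    rw [← this]
  rw [key, h1, one_smul]

/-- homothety -/
noncomputable def homo (c : ℝ) (hc : c ≠ 0) : E ≃L[ℝ] E :=
  ContinuousLinearEquiv.smulLeft (Units.mk0 c hc)

lemma homo_apply (c : ℝ) (hc : c ≠ 0) (x : E) : homo c hc x = c • x := rfl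

lemma gm_tendsto (φ : E →ᵇ ℝ) (x : E) :
    Filter.Tendsto (fun y => ∫ u, φ (x + u) ∂(gm y : Measure E)) (nhdsWithin 0 (Set.Ioi 0))
      (nhds (φ x)) := by
  have i1 := gm_prob (E := E) one_pos
  have e : ∀ y : ℝ, 0 < y → ∫ u, φ (x + u) ∂(gm y : Measure E) =
      ∫ u, φ (x + sqrt y • u) ∂(gm 1 : Measure E) := by
    intro y hy
    have hs : 0 < sqrt y := sqrt_pos.2 hy
    have := gm_map (E := E) one_pos hs (homo (sqrt y) hs.ne') (by
      intro x; rw [homo_apply, norm_smul, norm_of_nonneg hs.le])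
    rw [sq_sqrt hy.le, mul_one] at this
    rw [← this, integral_map (homo (sqrt y) hs.ne').continuous.measurable.aemeasurable]
    · rfl
    · exact (φ.continuous.comp (continuous_const.add continuous_id)).aestronglyMeasurable
  have h : Filter.Tendsto (fun y => ∫ u, φ (x + sqrt y • u) ∂(gm 1 : Measure E)) (nhds 0)
      (nhds (∫ u, φ (x + sqrt 0 • u) ∂(gm 1 : Measure E))) := by
    refine (continuous_of_dominated (bound := fun _ => ‖φ‖) ?_ ?_ (integrable_const _) ?_).tendsto 0
    · intro y
      exact (φ.continuous.comp (by fun_prop)).aestronglyMeasurable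
    · intro y
      exact Filter.Eventually.of_forall fun u => φ.norm_coe_le_norm _
    · refine Filter.Eventually.of_forall fun u => φ.continuous.comp ?_
      have := Real.continuous_sqrt
      fun_prop
  simp only [sqrt_zero, zero_smul, add_zero, integral_const, probReal_univ, smul_eq_mul, one_mul] at h
  refine (h.mono_left nhdsWithin_le_nhds).congr' ?_
  filter_upwards [self_mem_nhdsWithin] with y hy
  exact (e y hy).symm

end GauPart

open MeasureTheory Real
open scoped BoundedContinuousFunction
set_option linter.unusedSectionVars false

section ScalarPart

lemma sq_le_entropy {x : ℝ} (hx : |x| < 1) :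
    x ^ 2 ≤ (1 + x) * log (1 + x) + (1 - x) * log (1 - x) := by
  have h1 := Real.hasSum_log_sub_log_of_abs_lt_one hx
  have hx2 : |x ^ 2| < 1 := by rw [abs_pow]; exact pow_lt_one₀ (abs_nonneg _) hx (by norm_num)
  have h2 := Real.hasSum_pow_div_log_of_abs_lt_one hx2
  have h3 := (h1.mul_left x).sub h2
  obtain ⟨ha, hb⟩ := abs_lt.1 hx
  have e : x * (log (1 + x) - log (1 - x)) - -log (1 - x ^ 2) =
      (1 + x) * log (1 + x) + (1 - x) * log (1 - x) := by
    have : 1 - x ^ 2 = (1 + x) * (1 - x) := by ring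
    rw [this, log_mul (by linarith) (by linarith)]
    ring
  rw [e] at h3
  have h4 := le_hasSum h3 0 (by
    intro k _
    have e2 : x * (2 * (1 / (2 * (k : ℝ) + 1)) * x ^ (2 * k + 1)) - (x ^ 2) ^ (k + 1) / ((k : ℝ) + 1)
        = (x ^ 2) ^ (k + 1) * (1 / ((2 * k + 1) * (k + 1))) := by
      have : x ^ (2 * k + 1) = (x ^ 2) ^ k * x := by rw [← pow_mul]; ring
      rw [this]
      field_simp
      ring
    rw [e2]
    positivity)
  refine le_trans (le_of_eq ?_) h4
  norm_num
  ring

lemma ent_mid {a b : ℝ} (ha : 0 < a) (hb : 0 < b) :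
    (negMulLog a + negMulLog b) / 2 + (a - b) ^ 2 / (4 * (a + b)) ≤ negMulLog ((a + b) / 2) := by
  set m := (a + b) / 2 with hm
  have hm0 : 0 < m := by positivity
  set x := (a - b) / (a + b) with hx
  have hx1 : |x| < 1 := by
    rw [hx, abs_div, abs_of_pos (show 0 < a + b by positivity), div_lt_one (by positivity), abs_lt]
    constructor <;> linarith
  have h := sq_le_entropy hx1
  obtain ⟨h1, h2⟩ := abs_lt.1 hx1
  have e1 : a = m * (1 + x) := by rw [hm, hx]; field_simp; ring
  have e2 : b = m * (1 - x) := by rw [hm, hx]; field_simp; ring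
  have e3 : (a - b) ^ 2 / (4 * (a + b)) = m * x ^ 2 / 2 := by rw [hm, hx]; field_simp; ring
  have l1 : log a = log m + log (1 + x) := by rw [e1, log_mul hm0.ne' (by linarith)]
  have l2 : log b = log m + log (1 - x) := by rw [e2, log_mul hm0.ne' (by linarith)]
  rw [e3]
  unfold negMulLog
  rw [l1, l2]
  have e4 : (-a * (log m + log (1 + x)) + -b * (log m + log (1 - x))) / 2 + m * x ^ 2 / 2
      = -m * log m - m / 2 * ((1 + x) * log (1 + x) + (1 - x) * log (1 - x) - x ^ 2) := by
    have e5 : a + b = 2 * m := by rw [hm]; ring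
    have : -a * (log m + log (1 + x)) + -b * (log m + log (1 - x))
      = -(a + b) * log m - a * log (1 + x) - b * log (1 - x) := by ring
    rw [this, e5]
    nth_rewrite 1 [e1]
    nth_rewrite 1 [e2]
    ring
  rw [e4]
  have : 0 ≤ m / 2 * ((1 + x) * log (1 + x) + (1 - x) * log (1 - x) - x ^ 2) :=
    mul_nonneg (by positivity) (by linarith)
  linarith

lemma ent_tan {a c : ℝ} (ha : 0 < a) (hc : 0 < c) :
    negMulLog a ≤ -log c * a - a + c := by
  have h := log_le_sub_one_of_pos (show 0 < c / a by positivity)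
  rw [log_div hc.ne' ha.ne'] at h
  have h2 : a * (log c - log a) ≤ a * (c / a - 1) := mul_le_mul_of_nonneg_left h ha.le
  have : a * (c / a - 1) = c - a := by field_simp
  unfold negMulLog
  nlinarith

lemma ent_pt {a b c : ℝ} (t : ℝ) (ha : 0 < a) (hb : 0 < b) (hc : 0 < c) :
    (negMulLog a + negMulLog b) / 2 + t / 2 * |a - b| - t ^ 2 / 4 * (a + b) ≤
      -log c * ((a + b) / 2) - (a + b) / 2 + c := by
  have h1 := ent_mid ha hb
  have h2 := ent_tan (show 0 < (a + b) / 2 by positivity) hc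
  have h3 : t / 2 * |a - b| - t ^ 2 / 4 * (a + b) ≤ (a - b) ^ 2 / (4 * (a + b)) := by
    rw [le_div_iff₀ (by positivity), ← sq_abs (a - b)]
    nlinarith [sq_nonneg (|a - b| - t * (a + b))]
  linarith

end ScalarPart

section MixPart
variable {E : Type*} [NormedAddCommGroup E] [InnerProductSpace ℝ E] [FiniteDimensional ℝ E]
  [MeasurableSpace E] [BorelSpace E]

/-- finite mixtures -/
structure Mix (E : Type*) where
  s : Finset E
  p : E → ℝ
  pos : ∀ x ∈ s, 0 < p x
  sum : ∑ x ∈ s, p x = 1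

namespace Mix
variable (X : Mix E)

/-- the density of the smoothed mixture -/
noncomputable def g (y : ℝ) (u : E) : ℝ := ∑ x ∈ X.s, X.p x * gau y (u - x)

lemma nonempty : X.s.Nonempty := by
  by_contra h
  rw [Finset.not_nonempty_iff_eq_empty] at h
  have := X.sum
  simp [h] at this

lemma g_pos {y : ℝ} (hy : 0 < y) (u : E) : 0 < X.g y u :=
  Finset.sum_pos (fun x hx => mul_pos (X.pos x hx) (gau_pos hy _)) X.nonempty

lemma g_cont (y : ℝ) : Continuous (X.g y) := by
  unfold g
  refine continuous_finsetSum _ fun x _ => continuous_const.mul ?_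
  exact (gau_cont y).comp (by fun_prop)

lemma g_le {y : ℝ} (hy : 0 < y) (u : E) :
    X.g y u ≤ (2 * π * y) ^ (-(Module.finrank ℝ E : ℝ) / 2) := by
  calc X.g y u ≤ ∑ x ∈ X.s, X.p x * (2 * π * y) ^ (-(Module.finrank ℝ E : ℝ) / 2) :=
        Finset.sum_le_sum fun x hx => mul_le_mul_of_nonneg_left (gau_le hy _) (X.pos x hx).le
    _ = _ := by rw [← Finset.sum_mul, X.sum, one_mul]

lemma g_integrable {y : ℝ} (hy : 0 < y) : Integrable (X.g y) := by
  unfold g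
  exact integrable_finsetSum _ fun x _ => ((gau_integrable hy).comp_sub_right x).const_mul _

lemma g_integral {y : ℝ} (hy : 0 < y) : ∫ u, X.g y u = 1 := by
  unfold g
  rw [integral_finsetSum _ fun x _ => ((gau_integrable hy).comp_sub_right x).const_mul _]
  rw [← X.sum]
  refine Finset.sum_congr rfl fun x _ => ?_
  rw [integral_const_mul, integral_sub_right_eq_self (fun z => gau y z), gau_integral hy, mul_one]

lemma g_bdd_integrable {y s : ℝ} (hy : 0 < y) (hs : 0 < s) (u : E) :
    Integrable (fun z => X.g y (u - z)) (gm s) := by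
  have := gm_prob (E := E) hs
  refine Integrable.of_bound (C := (2 * π * y) ^ (-(Module.finrank ℝ E : ℝ) / 2)) ?_ ?_
  · exact ((X.g_cont y).comp (by fun_prop)).aestronglyMeasurable
  · refine Filter.Eventually.of_forall fun z => ?_
    rw [norm_of_nonneg (X.g_pos hy _).le]
    exact X.g_le hy _

lemma g_conv {y s : ℝ} (hy : 0 < y) (hs : 0 < s) (u : E) :
    ∫ z, X.g y (u - z) ∂(gm s) = X.g (y + s) u := by
  rw [gm_integral hs]
  unfold g
  have e : ∀ z : E, gau s z * ∑ x ∈ X.s, X.p x * gau y (u - z - x) =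
      ∑ x ∈ X.s, X.p x * (gau y (u - x - z) * gau s z) := by
    intro z
    rw [Finset.mul_sum]
    refine Finset.sum_congr rfl fun x _ => ?_
    rw [sub_right_comm u z x]; ring
  simp_rw [e]
  rw [integral_finsetSum _ fun x _ => (gau_conv_integrable hy hs (u - x)).const_mul _]
  refine Finset.sum_congr rfl fun x _ => ?_
  rw [integral_const_mul, gau_conv hy hs]

lemma g_sq_integrable {y : ℝ} (hy : 0 < y) (z : E) :
    Integrable (fun u => ‖u‖ ^ 2 * X.g y (u - z)) := by
  unfold g
  simp_rw [Finset.mul_sum]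
  refine integrable_finsetSum _ fun x hx => ?_
  have h1 : Integrable (fun u : E => X.p x * (2 * (‖u - (z + x)‖ ^ 2 * gau y (u - (z + x)))
      + 2 * ‖z + x‖ ^ 2 * gau y (u - (z + x)))) := by
    refine Integrable.const_mul (Integrable.add ?_ ?_) _
    · exact ((gau_sq_integrable hy).comp_sub_right (z + x)).const_mul _
    · exact ((gau_integrable hy).comp_sub_right (z + x)).const_mul _
  refine h1.mono' ?_ ?_
  · have := gau_cont (E := E) y
    exact Continuous.aestronglyMeasurable (by fun_prop)
  · refine Filter.Eventually.of_forall fun u => ?_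
    have hp := X.pos x hx
    have hg := gau_pos hy (u - (z + x))
    rw [sub_sub, norm_of_nonneg (by positivity)]
    have h3 : ‖u‖ ≤ ‖u - (z + x)‖ + ‖z + x‖ := by
      have := norm_add_le (u - (z + x)) (z + x)
      rwa [sub_add_cancel] at this
    have h2 : ‖u‖ ^ 2 ≤ 2 * ‖u - (z + x)‖ ^ 2 + 2 * ‖z + x‖ ^ 2 := by
      nlinarith [sq_nonneg (‖u - (z + x)‖ - ‖z + x‖), norm_nonneg u]
    calc ‖u‖ ^ 2 * (X.p x * gau y (u - (z + x))) = X.p x * (‖u‖ ^ 2 * gau y (u - (z + x))) := by ring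
      _ ≤ X.p x * ((2 * ‖u - (z + x)‖ ^ 2 + 2 * ‖z + x‖ ^ 2) * gau y (u - (z + x))) := by gcongr
      _ = _ := by ring

lemma log_g_bound {y : ℝ} (hy : 0 < y) : ∃ C D : ℝ, 0 ≤ C ∧ 0 ≤ D ∧
    ∀ u, |log (X.g y u)| ≤ C + D * ‖u‖ ^ 2 := by
  obtain ⟨x, hx⟩ := X.nonempty
  have hp := X.pos x hx
  set A := log ((2 * π * y) ^ (-(Module.finrank ℝ E : ℝ) / 2)) with hA
  set B := log (X.p x) + -(Module.finrank ℝ E : ℝ) / 2 * log (2 * π * y) - 1 / y * ‖x‖ ^ 2 with hB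
  refine ⟨|A| + |B|, 1 / y, by positivity, by positivity, fun u => ?_⟩
  have h1 : log (X.g y u) ≤ A := log_le_log (X.g_pos hy u) (X.g_le hy u)
  have h2 : X.p x * gau y (u - x) ≤ X.g y u :=
    Finset.single_le_sum (f := fun x => X.p x * gau y (u - x))
      (fun i hi => (mul_pos (X.pos i hi) (gau_pos hy _)).le) hx
  have h3 := log_le_log (mul_pos hp (gau_pos hy _)) h2
  rw [log_mul hp.ne' (gau_pos hy _).ne', gau_log hy] at h3
  have h4 : 1 / (2 * y) * ‖u - x‖ ^ 2 ≤ 1 / y * ‖u‖ ^ 2 + 1 / y * ‖x‖ ^ 2 := by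
    have h3 : ‖u - x‖ ≤ ‖u‖ + ‖x‖ := norm_sub_le _ _
    have : ‖u - x‖ ^ 2 ≤ 2 * ‖u‖ ^ 2 + 2 * ‖x‖ ^ 2 := by
      nlinarith [sq_nonneg (‖u‖ - ‖x‖), norm_nonneg (u - x)]
    have h5 : 1 / (2 * y) * ‖u - x‖ ^ 2 ≤ 1 / (2 * y) * (2 * ‖u‖ ^ 2 + 2 * ‖x‖ ^ 2) := by gcongr
    refine h5.trans (le_of_eq ?_)
    field_simp
  have h5 : 0 ≤ 1 / y * ‖u‖ ^ 2 := by positivity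
  rw [abs_le]
  constructor
  · have := neg_abs_le B
    have := abs_nonneg A
    linarith
  · have := le_abs_self A
    have := abs_nonneg B
    linarith

lemma log_g_integrable {y Y : ℝ} (hy : 0 < y) (hY : 0 < Y) (z : E) :
    Integrable (fun u => log (X.g Y u) * X.g y (u - z)) := by
  obtain ⟨C, D, hC, hD, h⟩ := X.log_g_bound hY
  have h1 : Integrable (fun u => C * X.g y (u - z) + D * (‖u‖ ^ 2 * X.g y (u - z))) :=
    (((X.g_integrable hy).comp_sub_right z).const_mul C).add ((X.g_sq_integrable hy z).const_mul D)
  refine h1.mono' ?_ ?_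
  · have := X.g_cont y
    have h2 := X.g_cont Y
    refine Continuous.aestronglyMeasurable ?_
    exact (h2.log fun u => (X.g_pos hY u).ne').mul (by fun_prop)
  · refine Filter.Eventually.of_forall fun u => ?_
    have hg := X.g_pos hy (u - z)
    rw [norm_mul, norm_of_nonneg hg.le, norm_eq_abs]
    calc _ ≤ (C + D * ‖u‖ ^ 2) * X.g y (u - z) := by gcongr; exact h u
      _ = _ := by ring

lemma ent_integrable {y : ℝ} (hy : 0 < y) : Integrable (fun u => negMulLog (X.g y u)) := by
  have := (X.log_g_integrable hy hy 0).neg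
  refine this.congr (Filter.Eventually.of_forall fun u => ?_)
  simp [negMulLog]; ring

/-- differential entropy -/
noncomputable def H (y : ℝ) : ℝ := ∫ u, negMulLog (X.g y u)

/-- L1 modulus -/
noncomputable def phi (y : ℝ) (z : E) : ℝ := ∫ u, |X.g y (u - z) - X.g y u|

lemma phi_nonneg (y : ℝ) (z : E) : 0 ≤ X.phi y z := integral_nonneg fun _ => abs_nonneg _

lemma phi_integrable {y : ℝ} (hy : 0 < y) (z w : E) :
    Integrable (fun u => X.g y (u - z) - X.g y (u - w)) :=
  ((X.g_integrable hy).comp_sub_right z).sub ((X.g_integrable hy).comp_sub_right w)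

lemma phi_le {y : ℝ} (hy : 0 < y) (z : E) : X.phi y z ≤ 2 := by
  have h1 := (X.g_integrable hy).comp_sub_right z
  have h2 := X.g_integrable hy
  calc X.phi y z ≤ ∫ u, (X.g y (u - z) + X.g y u) := by
        refine integral_mono (h1.sub h2).abs (h1.add h2) fun u => ?_
        have := X.g_pos hy (u - z)
        have := X.g_pos hy u
        simp only [Pi.add_apply]
        rw [abs_le]; constructor <;> linarith
    _ = 2 := by
        rw [integral_add h1 h2, integral_sub_right_eq_self (fun z => X.g y z), X.g_integral hy]
        norm_num

lemma phi_meas (y : ℝ) : Measurable (X.phi y) := by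
  unfold phi
  have h : StronglyMeasurable (fun q : E × E => |X.g y (q.2 - q.1) - X.g y q.2|) := by
    have := X.g_cont y
    exact Continuous.stronglyMeasurable (by fun_prop)
  exact (h.integral_prod_right' (ν := (volume : Measure E))).measurable

lemma phi_two {y : ℝ} (z w : E) :
    ∫ u, |X.g y (u - z) - X.g y (u - w)| = X.phi y (z - w) := by
  unfold phi
  rw [← integral_sub_right_eq_self (fun u => |X.g y (u - (z - w)) - X.g y u|) w]
  refine integral_congr_ae (Filter.Eventually.of_forall fun u => ?_)
  simp

lemma phi_add {y : ℝ} (hy : 0 < y) (z w : E) : X.phi y (z + w) ≤ X.phi y z + X.phi y w := by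
  have e1 : X.phi y z = ∫ u, |X.g y (u - (z + w)) - X.g y (u - w)| := by
    rw [phi_two]; simp
  have e2 : X.phi y w = ∫ u, |X.g y (u - w) - X.g y (u - 0)| := by
    rw [phi_two]; simp
  have e3 : X.phi y (z + w) = ∫ u, |X.g y (u - (z + w)) - X.g y (u - 0)| := by
    rw [phi_two]; simp
  rw [e1, e2, e3, ← integral_add (X.phi_integrable hy _ _).abs (X.phi_integrable hy _ _).abs]
  exact integral_mono (X.phi_integrable hy _ _).abs
    ((X.phi_integrable hy _ _).abs.add (X.phi_integrable hy _ _).abs) fun u => abs_sub_le _ _ _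

lemma phi_nat {y : ℝ} (hy : 0 < y) (z : E) (n : ℕ) : X.phi y ((n : ℝ) • z) ≤ n * X.phi y z := by
  induction n with
  | zero => simp [phi]
  | succ n ih =>
    push_cast
    rw [add_smul, one_smul]
    have := X.phi_add hy ((n : ℝ) • z) z
    linarith

lemma phi_mono_add {y s : ℝ} (hy : 0 < y) (hs : 0 < s) (z : E) : X.phi (y + s) z ≤ X.phi y z := by
  have i1 := gm_prob (E := E) hs
  have hg := X.g_cont y
  have hcont : Continuous (fun q : E × E => X.g y (q.2 - z - q.1) - X.g y (q.2 - q.1)) := by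
    fun_prop
  have hI : ∀ w : E, ∫ u, ‖X.g y (u - z - w) - X.g y (u - w)‖ = X.phi y z := by
    intro w
    simp_rw [sub_sub, norm_eq_abs]
    rw [phi_two]; simp
  have hprod : Integrable (fun q : E × E => X.g y (q.2 - z - q.1) - X.g y (q.2 - q.1))
      ((gm s).prod volume) := by
    rw [integrable_prod_iff hcont.aestronglyMeasurable]
    constructor
    · refine Filter.Eventually.of_forall fun w => ?_
      simp_rw [sub_sub]
      exact X.phi_integrable hy _ _
    · simp_rw [hI]
      exact integrable_const _
  have e : ∀ u, X.g (y + s) (u - z) - X.g (y + s) u =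
      ∫ w, (X.g y (u - z - w) - X.g y (u - w)) ∂(gm s) := by
    intro u
    rw [integral_sub (X.g_bdd_integrable hy hs _) (X.g_bdd_integrable hy hs _), X.g_conv hy hs,
      X.g_conv hy hs]
  calc X.phi (y + s) z = ∫ u, ‖∫ w, (X.g y (u - z - w) - X.g y (u - w)) ∂(gm s)‖ := by
        unfold phi; simp_rw [e, norm_eq_abs]
    _ ≤ ∫ u, ∫ w, ‖X.g y (u - z - w) - X.g y (u - w)‖ ∂(gm s) := by
        refine integral_mono hprod.integral_prod_right.norm hprod.norm.integral_prod_right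
          fun u => norm_integral_le_integral_norm _
    _ = ∫ w, ∫ u, ‖X.g y (u - z - w) - X.g y (u - w)‖ ∂volume ∂(gm s) :=
        (integral_integral_swap (f := fun w u => ‖X.g y (u - z - w) - X.g y (u - w)‖) hprod.norm).symm
    _ = X.phi y z := by simp_rw [hI]; simp

lemma phi_mono {y y' : ℝ} (hy : 0 < y) (hyy : y ≤ y') (z : E) : X.phi y' z ≤ X.phi y z := by
  rcases hyy.eq_or_lt with rfl | h
  · rfl
  · have := X.phi_mono_add hy (sub_pos.2 h) z
    rwa [add_sub_cancel] at this

/-- mean square modulus -/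
noncomputable def Q (y w : ℝ) : ℝ := ∫ z, X.phi y z ^ 2 ∂(gm w)

lemma Q_integrable {y w : ℝ} (hy : 0 < y) (hw : 0 < w) : Integrable (fun z => X.phi y z ^ 2) (gm w) := by
  have i1 := gm_prob (E := E) hw
  refine Integrable.of_bound (C := 4) ((X.phi_meas y).pow_const 2).aestronglyMeasurable ?_
  refine Filter.Eventually.of_forall fun z => ?_
  rw [norm_of_nonneg (by positivity)]
  nlinarith [X.phi_nonneg y z, X.phi_le hy z]

lemma Q_nonneg (y w : ℝ) : 0 ≤ X.Q y w := integral_nonneg fun _ => sq_nonneg _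

lemma Q_scale {c w : ℝ} (y : ℝ) (hc : 0 < c) (hw : 0 < w) :
    X.Q y (c ^ 2 * w) = ∫ z, X.phi y (c • z) ^ 2 ∂(gm w) := by
  unfold Q
  rw [← gm_map (E := E) hw hc (homo c hc.ne') (by
      intro x; rw [homo_apply, norm_smul, norm_of_nonneg hc.le])]
  rw [integral_map (homo c hc.ne').continuous.measurable.aemeasurable]
  · rfl
  · exact ((X.phi_meas y).pow_const 2).aestronglyMeasurable

lemma Q_mono {y y' w : ℝ} (hy : 0 < y) (hyy : y ≤ y') (hw : 0 < w) : X.Q y' w ≤ X.Q y w := by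
  refine integral_mono (X.Q_integrable (hy.trans_le hyy) hw) (X.Q_integrable hy hw) fun z => ?_
  exact pow_le_pow_left₀ (X.phi_nonneg _ _) (X.phi_mono hy hyy z) 2

lemma Q_nat {y w : ℝ} (hy : 0 < y) (hw : 0 < w) {n : ℕ} (hn : 0 < n) :
    X.Q y ((n : ℝ) ^ 2 * w) ≤ (n : ℝ) ^ 2 * X.Q y w := by
  have i1 := gm_prob (E := E) hw
  rw [X.Q_scale y (Nat.cast_pos.2 hn) hw, Q, ← integral_const_mul]
  refine integral_mono_of_nonneg (Filter.Eventually.of_forall fun z => sq_nonneg _)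
    ((X.Q_integrable hy hw).const_mul _) (Filter.Eventually.of_forall fun z => ?_)
  simp only
  rw [← mul_pow]
  exact pow_le_pow_left₀ (X.phi_nonneg _ _) (X.phi_nat hy z n) 2

end Mix
end MixPart

open MeasureTheory Real
open scoped BoundedContinuousFunction
set_option linter.unusedSectionVars false

section MixPart2
variable {E : Type*} [NormedAddCommGroup E] [InnerProductSpace ℝ E] [FiniteDimensional ℝ E]
  [MeasurableSpace E] [BorelSpace E]

namespace Mix
variable (X : Mix E)

lemma ent_step_z {y s : ℝ} (hy : 0 < y) (hs : 0 < s) (z : E) :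
    X.H y + X.phi y ((2 : ℝ) • z) ^ 2 / 8 ≤
      ∫ u, -log (X.g (y + s) u) * ((X.g y (u - z) + X.g y (u - (-z))) / 2) := by
  have hys : 0 < y + s := by positivity
  set t := X.phi y ((2 : ℝ) • z) / 2 with ht
  have g1 := (X.g_integrable hy).comp_sub_right z
  have g2 := (X.g_integrable hy).comp_sub_right (-z)
  have n1 := (X.ent_integrable hy).comp_sub_right z
  have n2 := (X.ent_integrable hy).comp_sub_right (-z)
  have dd := (X.phi_integrable hy z (-z)).abs
  have l1 := X.log_g_integrable hy hys z
  have l2 := X.log_g_integrable hy hys (-z)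
  have gg := X.g_integrable hys
  have ll : Integrable (fun u => -log (X.g (y + s) u) * ((X.g y (u - z) + X.g y (u - (-z))) / 2)) := by
    refine ((l1.add l2).const_mul (-1 / 2)).congr (Filter.Eventually.of_forall fun u => ?_)
    simp only [Pi.add_apply]; ring
  have i1 : Integrable (fun u => (negMulLog (X.g y (u - z)) + negMulLog (X.g y (u - (-z)))) / 2) :=
    (n1.add n2).div_const 2
  have i2 : Integrable (fun u => t / 2 * |X.g y (u - z) - X.g y (u - (-z))|) := dd.const_mul _
  have i3 : Integrable (fun u => t ^ 2 / 4 * (X.g y (u - z) + X.g y (u - (-z)))) :=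
    (g1.add g2).const_mul _
  have i4 : Integrable (fun u => (X.g y (u - z) + X.g y (u - (-z))) / 2) := (g1.add g2).div_const 2
  have key := integral_mono ((i1.add i2).sub i3) ((ll.sub i4).add gg) (fun u =>
    ent_pt t (X.g_pos hy (u - z)) (X.g_pos hy (u - (-z))) (X.g_pos hys u))
  have G1 : ∫ u, X.g y (u - z) = 1 := by
    rw [integral_sub_right_eq_self (fun z => X.g y z), X.g_integral hy]
  have G2 : ∫ u, X.g y (u - (-z)) = 1 := by
    rw [integral_sub_right_eq_self (fun z => X.g y z), X.g_integral hy]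
  have N1 : ∫ u, negMulLog (X.g y (u - z)) = X.H y :=
    integral_sub_right_eq_self (fun u => negMulLog (X.g y u)) z
  have N2 : ∫ u, negMulLog (X.g y (u - (-z))) = X.H y :=
    integral_sub_right_eq_self (fun u => negMulLog (X.g y u)) (-z)
  have D1 : ∫ u, |X.g y (u - z) - X.g y (u - (-z))| = X.phi y ((2 : ℝ) • z) := by
    rw [X.phi_two, sub_neg_eq_add, two_smul]
  have I1 : ∫ u, (negMulLog (X.g y (u - z)) + negMulLog (X.g y (u - (-z)))) / 2 = X.H y := by
    rw [integral_div, integral_add n1 n2, N1, N2]; ring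
  have I3 : ∫ u, t ^ 2 / 4 * (X.g y (u - z) + X.g y (u - (-z))) = t ^ 2 / 2 := by
    rw [integral_const_mul, integral_add g1 g2, G1, G2]; ring
  have I4 : ∫ u, (X.g y (u - z) + X.g y (u - (-z))) / 2 = 1 := by
    rw [integral_div, integral_add g1 g2, G1, G2]; norm_num
  have L : ∫ u, (((negMulLog (X.g y (u - z)) + negMulLog (X.g y (u - (-z)))) / 2 +
      t / 2 * |X.g y (u - z) - X.g y (u - (-z))|) - t ^ 2 / 4 * (X.g y (u - z) + X.g y (u - (-z))))
      = X.H y + t / 2 * X.phi y ((2 : ℝ) • z) - t ^ 2 / 2 := by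
    have i12 : Integrable (fun u => (negMulLog (X.g y (u - z)) + negMulLog (X.g y (u - (-z)))) / 2 +
      t / 2 * |X.g y (u - z) - X.g y (u - (-z))|) := i1.add i2
    rw [integral_sub i12 i3, integral_add i1 i2, I1, I3, integral_const_mul, D1]
  have R : ∫ u, (-log (X.g (y + s) u) * ((X.g y (u - z) + X.g y (u - (-z))) / 2) -
      (X.g y (u - z) + X.g y (u - (-z))) / 2 + X.g (y + s) u) =
      ∫ u, -log (X.g (y + s) u) * ((X.g y (u - z) + X.g y (u - (-z))) / 2) := by
    have i5 : Integrable (fun u => -log (X.g (y + s) u) * ((X.g y (u - z) + X.g y (u - (-z))) / 2) -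
      (X.g y (u - z) + X.g y (u - (-z))) / 2) := ll.sub i4
    rw [integral_add i5 gg, integral_sub ll i4, I4, X.g_integral hys]; ring
  have key2 := (L.symm.le.trans key).trans R.le
  refine le_trans (le_of_eq ?_) key2
  rw [ht]; ring

lemma ent_step {y s : ℝ} (hy : 0 < y) (hs : 0 < s) :
    X.Q y (4 * s) ≤ 8 * (X.H (y + s) - X.H y) := by
  have hys : 0 < y + s := by positivity
  have i1 := gm_prob (E := E) hs
  have hgy := X.g_cont y
  have hgl : Continuous fun u => log (X.g (y + s) u) :=
    (X.g_cont (y + s)).log fun u => (X.g_pos hys u).ne'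
  have hc : Continuous (fun q : E × E =>
      -log (X.g (y + s) q.2) * ((X.g y (q.2 - q.1) + X.g y (q.2 - (-q.1))) / 2)) := by
    have := hgl.comp (continuous_snd (X := E) (Y := E))
    simp only [Function.comp_def] at this
    fun_prop
  have b2 : ∀ u, Integrable (fun z => X.g y (u - (-z))) (gm s) := by
    intro u
    refine Integrable.of_bound (C := (2 * π * y) ^ (-(Module.finrank ℝ E : ℝ) / 2)) ?_ ?_
    · exact Continuous.aestronglyMeasurable (by fun_prop)
    · refine Filter.Eventually.of_forall fun z => ?_
      rw [norm_of_nonneg (X.g_pos hy _).le]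
      exact X.g_le hy _
  have c2 : ∀ u, ∫ z, X.g y (u - (-z)) ∂(gm s) = X.g (y + s) u := by
    intro u
    rw [← X.g_conv hy hs]
    conv_rhs => rw [← gm_neg, integral_map measurable_neg.aemeasurable
      (Continuous.aestronglyMeasurable (by fun_prop))]
  have b : ∀ u, Integrable (fun z => (X.g y (u - z) + X.g y (u - (-z))) / 2) (gm s) := fun u =>
    ((X.g_bdd_integrable hy hs u).add (b2 u)).div_const 2
  have c : ∀ u, ∫ z, (X.g y (u - z) + X.g y (u - (-z))) / 2 ∂(gm s) = X.g (y + s) u := by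
    intro u
    rw [integral_div, integral_add (X.g_bdd_integrable hy hs u) (b2 u), c2, X.g_conv hy hs]; ring
  have hprod : Integrable (fun q : E × E =>
      -log (X.g (y + s) q.2) * ((X.g y (q.2 - q.1) + X.g y (q.2 - (-q.1))) / 2))
      ((gm s).prod volume) := by
    rw [integrable_prod_iff' hc.aestronglyMeasurable]
    constructor
    · refine Filter.Eventually.of_forall fun u => ?_
      have h0 := (b u).const_mul (-log (X.g (y + s) u))
      exact h0
    · have h0 : Integrable (fun u => ‖log (X.g (y + s) u)‖ * X.g (y + s) u) := by
        refine ((X.log_g_integrable hys hys 0).norm).congr (Filter.Eventually.of_forall fun u => ?_)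
        simp only [sub_zero]
        rw [norm_mul, norm_of_nonneg (X.g_pos hys u).le]
      refine h0.congr (Filter.Eventually.of_forall fun u => ?_)
      simp only
      have : ∀ z, ‖-log (X.g (y + s) u) * ((X.g y (u - z) + X.g y (u - (-z))) / 2)‖ =
          ‖log (X.g (y + s) u)‖ * ((X.g y (u - z) + X.g y (u - (-z))) / 2) := by
        intro z
        rw [norm_mul, norm_neg]
        congr 1
        refine norm_of_nonneg ?_
        have := X.g_pos hy (u - z)
        have := X.g_pos hy (u - (-z))
        positivity
      simp_rw [this]
      rw [integral_const_mul, c]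
  have hQ := X.Q_integrable hy (show 0 < (2 : ℝ) ^ 2 * s by positivity)
  have hq : Integrable (fun z => X.phi y ((2 : ℝ) • z) ^ 2) (gm s) := by
    refine Integrable.of_bound (C := 4) ?_ ?_
    · exact (((X.phi_meas y).comp (measurable_const_smul (2 : ℝ))).pow_const 2).aestronglyMeasurable
    · refine Filter.Eventually.of_forall fun z => ?_
      rw [norm_of_nonneg (by positivity)]
      nlinarith [X.phi_nonneg y ((2 : ℝ) • z), X.phi_le hy ((2 : ℝ) • z)]
  have m := integral_mono ((integrable_const (X.H y)).add (hq.div_const 8))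
    hprod.integral_prod_left (fun z => X.ent_step_z hy hs z)
  have e1 : ∫ z, (X.H y + X.phi y ((2 : ℝ) • z) ^ 2 / 8) ∂(gm s) = X.H y + X.Q y (4 * s) / 8 := by
    rw [integral_add (integrable_const _) (hq.div_const 8), integral_div,
      show (4 : ℝ) * s = 2 ^ 2 * s by norm_num, X.Q_scale y two_pos hs]
    simp
  have e2 : ∫ z, ∫ u, -log (X.g (y + s) u) * ((X.g y (u - z) + X.g y (u - (-z))) / 2) ∂volume ∂(gm s)
      = X.H (y + s) := by
    rw [integral_integral_swap (f := fun z u =>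
      -log (X.g (y + s) u) * ((X.g y (u - z) + X.g y (u - (-z))) / 2)) hprod]
    unfold H
    refine integral_congr_ae (Filter.Eventually.of_forall fun u => ?_)
    simp only
    rw [integral_const_mul, c]
    unfold negMulLog
    ring
  have m2 := (e1.symm.le.trans m).trans e2.le
  linarith

lemma H_mono {y y' : ℝ} (hy : 0 < y) (hyy : y ≤ y') : X.H y ≤ X.H y' := by
  rcases hyy.eq_or_lt with rfl | h
  · rfl
  · have := X.ent_step hy (sub_pos.2 h)
    rw [add_sub_cancel] at this
    have := X.Q_nonneg y (4 * (y' - y))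
    linarith

lemma Q_bound {y0 y1 w : ℝ} (h0 : 0 < y0) (h01 : y0 < y1) (hw : 0 < w) :
    X.Q y1 w ≤ 2 * w * ((X.H y1 - X.H y0) / (y1 - y0)) := by
  have hd : 0 < y1 - y0 := sub_pos.2 h01
  set s := w / 4 with hs
  have hs0 : 0 < s := by positivity
  have key : ∀ n : ℕ, 0 < n →
      X.Q y1 w * ((y1 - y0) / s - 1 / (n : ℝ) ^ 2) ≤ 8 * (X.H y1 - X.H y0) := by
    intro n hn
    have hn' : (0 : ℝ) < n := Nat.cast_pos.2 hn
    set s' := s / (n : ℝ) ^ 2 with hs'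
    have hs'0 : 0 < s' := by positivity
    have h1 : X.Q y1 w ≤ (n : ℝ) ^ 2 * X.Q y1 (4 * s') := by
      have := X.Q_nat (h0.trans h01) (show 0 < 4 * s' by positivity) hn
      have e : (n : ℝ) ^ 2 * (4 * s') = w := by rw [hs', hs]; field_simp
      rwa [e] at this
    have h2 : ∀ N : ℕ, y0 + N * s' ≤ y1 →
        N * X.Q y1 (4 * s') ≤ 8 * (X.H (y0 + N * s') - X.H y0) := by
      intro N
      induction N with
      | zero => intro _; simp
      | succ N ih =>
        intro hN
        push_cast at hN ⊢
        have hN' : y0 + N * s' ≤ y1 := by nlinarith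
        have h3 := ih hN'
        have hpos : 0 < y0 + N * s' := by positivity
        have h4 := X.ent_step hpos hs'0
        have h5 := X.Q_mono hpos hN' (show 0 < 4 * s' by positivity)
        rw [show y0 + N * s' + s' = y0 + (N + 1) * s' by ring] at h4
        nlinarith
    set N := ⌊(y1 - y0) / s'⌋₊ with hN
    have hN1 : (N : ℝ) ≤ (y1 - y0) / s' := Nat.floor_le (by positivity)
    have hN2 : (y1 - y0) / s' < N + 1 := Nat.lt_floor_add_one _
    have hle : y0 + N * s' ≤ y1 := by
      rw [le_div_iff₀ hs'0] at hN1; linarith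
    have h3 := h2 N hle
    have h4 := X.H_mono (show 0 < y0 + N * s' by positivity) hle
    have h5 : (y1 - y0) / s - 1 / (n : ℝ) ^ 2 ≤ N / (n : ℝ) ^ 2 := by
      have e : (y1 - y0) / s' = (n : ℝ) ^ 2 * ((y1 - y0) / s) := by rw [hs']; field_simp
      rw [e] at hN2
      rw [le_div_iff₀ (by positivity), sub_mul, one_div, inv_mul_cancel₀ (by positivity)]
      linarith
    have hQ0 := X.Q_nonneg y1 w
    calc X.Q y1 w * ((y1 - y0) / s - 1 / (n : ℝ) ^ 2) ≤ X.Q y1 w * (N / (n : ℝ) ^ 2) := by gcongr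
      _ ≤ (n : ℝ) ^ 2 * X.Q y1 (4 * s') * (N / (n : ℝ) ^ 2) := by gcongr
      _ = N * X.Q y1 (4 * s') := by field_simp
      _ ≤ _ := by linarith
  have lim : Filter.Tendsto (fun n : ℕ => X.Q y1 w * ((y1 - y0) / s - 1 / (n : ℝ) ^ 2)) Filter.atTop
      (nhds (X.Q y1 w * ((y1 - y0) / s - 0))) := by
    refine Filter.Tendsto.const_mul _ (Filter.Tendsto.sub tendsto_const_nhds ?_)
    have := tendsto_const_div_pow (1 : ℝ) 2 (by norm_num)
    exact this.comp tendsto_natCast_atTop_atTop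
  have fin := le_of_tendsto lim (Filter.eventually_atTop.2 ⟨1, fun n hn => key n hn⟩)
  rw [sub_zero, ← mul_div_assoc, div_le_iff₀ hs0] at fin
  rw [← mul_div_assoc, le_div_iff₀ hd]
  rw [hs] at fin
  linarith

/-- the discrete measure -/
noncomputable def meas : Measure E := ∑ x ∈ X.s, ENNReal.ofReal (X.p x) • Measure.dirac x

instance : IsProbabilityMeasure X.meas := by
  constructor
  unfold meas
  rw [Measure.finsetSum_apply]
  simp only [Measure.smul_apply, measure_univ, smul_eq_mul, mul_one]
  rw [← ENNReal.ofReal_sum_of_nonneg fun x hx => (X.pos x hx).le, X.sum, ENNReal.ofReal_one]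

lemma integral_meas (f : E → ℝ) : ∫ u, f u ∂X.meas = ∑ x ∈ X.s, X.p x * f x := by
  unfold meas
  rw [integral_finsetSum_measure]
  · refine Finset.sum_congr rfl fun x hx => ?_
    rw [integral_smul_measure, integral_dirac, ENNReal.toReal_ofReal (X.pos x hx).le, smul_eq_mul]
  · intro x hx
    exact (integrable_dirac (by simp)).smul_measure ENNReal.ofReal_ne_top

lemma Cop_g {y : ℝ} (hy : 0 < y) (φ : E →ᵇ ℝ) (x : E) :
    (Cop X.meas * Cop (gm y)).app φ x = ∫ u, φ (x + u) * X.g y u := by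
  have := gm_prob (E := E) hy
  rw [OpB.mul_app, Cop_apply, X.integral_meas]
  unfold g
  simp_rw [Finset.mul_sum]
  have bi : ∀ v : E, Integrable (fun u => φ (x + u) * (X.p v * gau y (u - v))) := by
    intro v
    refine (((gau_integrable hy).comp_sub_right v).const_mul (X.p v)).bdd_mul (c := ‖φ‖) ?_ ?_
    · exact (φ.continuous.comp (by fun_prop)).aestronglyMeasurable
    · exact Filter.Eventually.of_forall fun u => φ.norm_coe_le_norm _
  rw [integral_finsetSum _ fun v _ => bi v]
  refine Finset.sum_congr rfl fun v _ => ?_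
  rw [Cop_apply, gm_integral hy, ← integral_const_mul,
    ← integral_sub_right_eq_self (fun u => X.p v * (gau y u * φ (x + v + u))) v]
  refine integral_congr_ae (Filter.Eventually.of_forall fun u => ?_)
  simp only
  rw [show x + v + (u - v) = x + u by abel]
  ring

lemma Cop_phi {y : ℝ} (hy : 0 < y) (z : E) :
    ‖Cop X.meas * Cop (gm y) * (Cop (Measure.dirac z) - 1)‖ ≤ X.phi y z := by
  refine OpB.norm_le_bound _ (X.phi_nonneg y z) fun φ x => ?_
  have i1 := X.g_integrable hy
  have i2 := i1.comp_sub_right z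
  have b1 : Integrable (fun u => φ (x + u) * X.g y u) := by
    refine i1.bdd_mul (c := ‖φ‖) ?_ ?_
    · exact (φ.continuous.comp (by fun_prop)).aestronglyMeasurable
    · exact Filter.Eventually.of_forall fun u => φ.norm_coe_le_norm _
  have b2 : Integrable (fun u => φ (x + u) * X.g y (u - z)) := by
    refine i2.bdd_mul (c := ‖φ‖) ?_ ?_
    · exact (φ.continuous.comp (by fun_prop)).aestronglyMeasurable
    · exact Filter.Eventually.of_forall fun u => φ.norm_coe_le_norm _
  have e : (Cop X.meas * Cop (gm y) * (Cop (Measure.dirac z) - 1)).app φ x =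
      ∫ u, φ (x + u) * (X.g y (u - z) - X.g y u) := by
    rw [mul_sub, mul_one, OpB.sub_app, OpB.mul_app, X.Cop_g hy, X.Cop_g hy]
    simp_rw [mul_sub, Cop_dirac]
    rw [integral_sub b2 b1]
    congr 1
    rw [← integral_add_right_eq_self (fun u => φ (x + u) * X.g y (u - z)) z]
    refine integral_congr_ae (Filter.Eventually.of_forall fun u => ?_)
    simp only [add_sub_cancel_right, add_assoc]
  rw [e, mul_comm, phi, ← integral_const_mul]
  refine norm_integral_le_of_norm_le ((i2.sub i1).abs.const_mul _)
    (Filter.Eventually.of_forall fun u => ?_)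
  rw [norm_mul, norm_eq_abs (_ - _)]
  gcongr
  exact φ.norm_coe_le_norm _

end Mix
end MixPart2

open MeasureTheory Real
open scoped BoundedContinuousFunction
set_option linter.unusedSectionVars false

section MixPart3

lemma log_sum_bound {ι : Type*} (s : Finset ι) (a : ι → ℝ) (ha : ∀ i ∈ s, 0 < a i) {i : ι}
    (hi : i ∈ s) :
    a i * log (∑ j ∈ s, a j) ≤ a i * log (a i) + 2 * (∑ j ∈ s, sqrt (a i * a j) - a i) := by
  have hai := ha i hi
  have h1 : ∑ j ∈ s, a j ≤ (∑ j ∈ s, sqrt (a j)) ^ 2 := by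
    have := Finset.sum_sq_le_sq_sum_of_nonneg (s := s) (f := fun j => sqrt (a j))
      (fun i _ => sqrt_nonneg _)
    refine le_trans (le_of_eq ?_) this
    refine Finset.sum_congr rfl fun j hj => ?_
    rw [sq_sqrt (ha j hj).le]
  have hpos : 0 < ∑ j ∈ s, a j := Finset.sum_pos ha ⟨i, hi⟩
  have hS : 0 < ∑ j ∈ s, sqrt (a j) := Finset.sum_pos (fun j hj => sqrt_pos.2 (ha j hj)) ⟨i, hi⟩
  have hs := sqrt_pos.2 hai
  have h2 := log_le_log hpos h1
  rw [log_pow] at h2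
  have h3 := log_le_sub_one_of_pos (show 0 < (∑ j ∈ s, sqrt (a j)) / sqrt (a i) by positivity)
  rw [log_div hS.ne' hs.ne', log_sqrt hai.le] at h3
  have h4 : log (∑ j ∈ s, a j) ≤ log (a i) + 2 * ((∑ j ∈ s, sqrt (a j)) / sqrt (a i) - 1) := by
    push_cast at h2
    linarith
  have e : ∑ j ∈ s, sqrt (a i * a j) = a i * ((∑ j ∈ s, sqrt (a j)) / sqrt (a i)) := by
    have : a i = sqrt (a i) * sqrt (a i) := (mul_self_sqrt hai.le).symm
    have e2 : a i * ((∑ j ∈ s, sqrt (a j)) / sqrt (a i)) = sqrt (a i) * (∑ j ∈ s, sqrt (a j)) := by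
      rw [mul_div_assoc', div_eq_iff hs.ne']
      nth_rewrite 1 [this]
      ring
    rw [e2, Finset.mul_sum]
    refine Finset.sum_congr rfl fun j _ => ?_
    rw [sqrt_mul hai.le]
  rw [e]
  have := mul_le_mul_of_nonneg_left h4 hai.le
  linarith

variable {E : Type*} [NormedAddCommGroup E] [InnerProductSpace ℝ E] [FiniteDimensional ℝ E]
  [MeasurableSpace E] [BorelSpace E]

namespace Mix
variable (X : Mix E)

lemma p_le {x : E} (hx : x ∈ X.s) : X.p x ≤ 1 := by
  rw [← X.sum]
  exact Finset.single_le_sum (f := X.p) (fun i hi => (X.pos i hi).le) hx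

open Classical in
lemma g_log_le {y D : ℝ} (hy : 0 < y) (hD : 0 < D)
    (hsep : ∀ x ∈ X.s, ∀ x' ∈ X.s, x ≠ x' → D ≤ ‖x - x'‖) (u : E) :
    X.g y u * log (X.g y u) ≤ ∑ i ∈ X.s, (X.p i * gau y (u - i) *
      (log (X.p i) - (Module.finrank ℝ E : ℝ) / 2 * log (2 * π * y)) +
      2 * ∑ j ∈ X.s.erase i, exp (-(D ^ 2 / (8 * y))) * gau y (u - (1 / 2 : ℝ) • (i + j))) := by
  conv_lhs => rw [g]
  rw [Finset.sum_mul]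
  refine Finset.sum_le_sum fun i hi => ?_
  have hpi := X.pos i hi
  have hgi := gau_pos hy (u - i)
  have h1 := log_sum_bound X.s (fun x => X.p x * gau y (u - x))
    (fun x hx => mul_pos (X.pos x hx) (gau_pos hy _)) hi
  refine h1.trans (add_le_add ?_ ?_)
  · refine mul_le_mul_of_nonneg_left ?_ (by positivity)
    rw [log_mul hpi.ne' hgi.ne', gau_log hy]
    have : 0 ≤ 1 / (2 * y) * ‖u - i‖ ^ 2 := by positivity
    linarith
  · refine mul_le_mul_of_nonneg_left ?_ two_pos.le
    rw [← Finset.add_sum_erase _ _ hi, sqrt_mul_self (by positivity), add_sub_cancel_left]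
    refine Finset.sum_le_sum fun j hj => ?_
    obtain ⟨hji, hj⟩ := Finset.mem_erase.1 hj
    have hpj := X.pos j hj
    have hgj := gau_pos hy (u - j)
    calc sqrt (X.p i * gau y (u - i) * (X.p j * gau y (u - j)))
        ≤ sqrt (gau y (u - i) * gau y (u - j)) := by
          refine sqrt_le_sqrt ?_
          have h1 : X.p i * gau y (u - i) ≤ gau y (u - i) := by nlinarith [X.p_le hi]
          have h2 : X.p j * gau y (u - j) ≤ gau y (u - j) := by nlinarith [X.p_le hj]
          gcongr
      _ = exp (-(‖i - j‖ ^ 2 / (8 * y))) * gau y (u - (1 / 2 : ℝ) • (i + j)) := gau_sqrt_mul hy u i j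
      _ ≤ _ := by
          have := gau_pos hy (u - (1 / 2 : ℝ) • (i + j))
          have h3 := hsep i hi j hj (Ne.symm hji)
          gcongr

lemma H_lower {y D : ℝ} (hy : 0 < y) (hD : 0 < D)
    (hsep : ∀ x ∈ X.s, ∀ x' ∈ X.s, x ≠ x' → D ≤ ‖x - x'‖) :
    ∑ x ∈ X.s, negMulLog (X.p x) + (Module.finrank ℝ E : ℝ) / 2 * log (2 * π * y)
      - 2 * (X.s.card : ℝ) ^ 2 * exp (-(D ^ 2 / (8 * y))) ≤ X.H y := by
  classical
  have I1 : ∀ i : E, Integrable (fun u => X.p i * gau y (u - i) *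
      (log (X.p i) - (Module.finrank ℝ E : ℝ) / 2 * log (2 * π * y))) := fun i =>
    (((gau_integrable hy).comp_sub_right i).const_mul _).mul_const _
  have I2 : ∀ v : E, Integrable (fun u => exp (-(D ^ 2 / (8 * y))) * gau y (u - v)) := fun v =>
    ((gau_integrable hy).comp_sub_right v).const_mul _
  have I3 : ∀ i : E, Integrable (fun u => 2 * ∑ j ∈ X.s.erase i, exp (-(D ^ 2 / (8 * y))) *
      gau y (u - (1 / 2 : ℝ) • (i + j))) := fun i =>
    (integrable_finsetSum _ fun j _ => I2 _).const_mul _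
  have I4 : ∀ i : E, Integrable (fun u => X.p i * gau y (u - i) *
      (log (X.p i) - (Module.finrank ℝ E : ℝ) / 2 * log (2 * π * y)) +
      2 * ∑ j ∈ X.s.erase i, exp (-(D ^ 2 / (8 * y))) * gau y (u - (1 / 2 : ℝ) • (i + j))) := fun i =>
    (I1 i).add (I3 i)
  have hg : ∀ v : E, ∫ u, gau y (u - v) = 1 := fun v => by
    rw [integral_sub_right_eq_self (fun z => gau y z), gau_integral hy]
  have m : ∫ u, X.g y u * log (X.g y u) ≤ _ :=
    integral_mono (by
      refine (X.ent_integrable hy).neg.congr (Filter.Eventually.of_forall fun u => ?_)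
      simp [negMulLog]) (integrable_finsetSum X.s fun i _ => I4 i) (X.g_log_le hy hD hsep)
  have eH : ∫ u, X.g y u * log (X.g y u) = - X.H y := by
    unfold H
    rw [← integral_neg]
    refine integral_congr_ae (Filter.Eventually.of_forall fun u => ?_)
    simp [negMulLog]
  rw [eH, integral_finsetSum _ fun i _ => I4 i] at m
  have e3 : ∀ i : E, ∫ u, (X.p i * gau y (u - i) *
      (log (X.p i) - (Module.finrank ℝ E : ℝ) / 2 * log (2 * π * y)) +
      2 * ∑ j ∈ X.s.erase i, exp (-(D ^ 2 / (8 * y))) * gau y (u - (1 / 2 : ℝ) • (i + j))) =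
      X.p i * (log (X.p i) - (Module.finrank ℝ E : ℝ) / 2 * log (2 * π * y)) +
      2 * ((X.s.erase i).card * exp (-(D ^ 2 / (8 * y)))) := by
    intro i
    rw [integral_add (I1 i) (I3 i), integral_mul_const, integral_const_mul, hg, mul_one,
      integral_const_mul, integral_finsetSum _ fun j _ => I2 _]
    simp_rw [integral_const_mul, hg]
    simp
  simp_rw [e3] at m
  have m2 : ∑ i ∈ X.s, (X.p i * (log (X.p i) - (Module.finrank ℝ E : ℝ) / 2 * log (2 * π * y)) +
      2 * ((X.s.erase i).card * exp (-(D ^ 2 / (8 * y))))) ≤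
      ∑ i ∈ X.s, (X.p i * (log (X.p i) - (Module.finrank ℝ E : ℝ) / 2 * log (2 * π * y)) +
      2 * ((X.s).card * exp (-(D ^ 2 / (8 * y))))) := by
    refine Finset.sum_le_sum fun i _ => ?_
    gcongr
    exact Finset.erase_subset _ _
  have m3 : ∑ i ∈ X.s, (X.p i * (log (X.p i) - (Module.finrank ℝ E : ℝ) / 2 * log (2 * π * y)) +
      2 * ((X.s).card * exp (-(D ^ 2 / (8 * y))))) =
      -∑ x ∈ X.s, negMulLog (X.p x) - (Module.finrank ℝ E : ℝ) / 2 * log (2 * π * y)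
      + 2 * (X.s.card : ℝ) ^ 2 * exp (-(D ^ 2 / (8 * y))) := by
    rw [Finset.sum_add_distrib, Finset.sum_const, nsmul_eq_mul, ← Finset.sum_neg_distrib]
    have : ∑ i ∈ X.s, X.p i * (log (X.p i) - (Module.finrank ℝ E : ℝ) / 2 * log (2 * π * y)) =
        ∑ x ∈ X.s, -negMulLog (X.p x) - (∑ x ∈ X.s, X.p x) * ((Module.finrank ℝ E : ℝ) / 2 * log (2 * π * y)) := by
      rw [Finset.sum_mul, ← Finset.sum_sub_distrib]
      refine Finset.sum_congr rfl fun x _ => ?_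
      unfold negMulLog; ring
    rw [this, X.sum]
    ring
  linarith

lemma H_upper {R : ℝ} (hR : ∀ x ∈ X.s, ‖x‖ ≤ R) :
    X.H 1 ≤ (Module.finrank ℝ E : ℝ) / 2 * log (2 * π) + (∫ u : E, ‖u‖ ^ 2 * gau 1 u) + R ^ 2 := by
  set d : ℝ := (Module.finrank ℝ E : ℝ) / 2 * log (2 * π) with hd
  have I1 : ∀ x : E, Integrable (fun u : E => ‖u - x‖ ^ 2 * gau 1 (u - x)) := fun x =>
    (gau_sq_integrable one_pos).comp_sub_right x
  have I2 : ∀ x : E, Integrable (fun u : E => gau 1 (u - x)) := fun x =>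
    (gau_integrable one_pos).comp_sub_right x
  have I3 : ∀ x : E, Integrable (fun u : E => X.p x * (d * gau 1 (u - x) + ‖u - x‖ ^ 2 * gau 1 (u - x)
      + R ^ 2 * gau 1 (u - x))) := fun x =>
    ((((I2 x).const_mul d).add (I1 x)).add ((I2 x).const_mul _)).const_mul _
  have I4 : Integrable (fun u => (∑ x ∈ X.s, X.p x * (d * gau 1 (u - x) + ‖u - x‖ ^ 2 * gau 1 (u - x)
      + R ^ 2 * gau 1 (u - x)) - X.g 1 u) ) :=
    (integrable_finsetSum _ fun x _ => I3 x).sub (X.g_integrable one_pos)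
  have I5 : Integrable (fun u => (∑ x ∈ X.s, X.p x * (d * gau 1 (u - x) + ‖u - x‖ ^ 2 * gau 1 (u - x)
      + R ^ 2 * gau 1 (u - x)) - X.g 1 u) + gau 1 u) := I4.add (gau_integrable one_pos)
  have m := integral_mono (X.ent_integrable one_pos) I5 (fun u => by
    have h := ent_tan (X.g_pos one_pos u) (gau_pos one_pos u)
    refine h.trans ?_
    gcongr ?_ - _ + _
    rw [g, Finset.mul_sum]
    refine Finset.sum_le_sum fun x hx => ?_
    have hp := X.pos x hx
    have hg := gau_pos one_pos (u - x)
    have : -log (gau 1 u) ≤ d + ‖u - x‖ ^ 2 + R ^ 2 := by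
      rw [gau_log one_pos, mul_one, mul_one, hd]
      have h3 : ‖u‖ ≤ ‖u - x‖ + ‖x‖ := by
        have := norm_add_le (u - x) x
        rwa [sub_add_cancel] at this
      have h4 := hR x hx
      have h5 : ‖u‖ ^ 2 ≤ 2 * ‖u - x‖ ^ 2 + 2 * ‖x‖ ^ 2 := by
        nlinarith [sq_nonneg (‖u - x‖ - ‖x‖), norm_nonneg u]
      have h6 : ‖x‖ ^ 2 ≤ R ^ 2 := by gcongr
      linarith
    calc -log (gau 1 u) * (X.p x * gau 1 (u - x)) ≤ (d + ‖u - x‖ ^ 2 + R ^ 2) * (X.p x * gau 1 (u - x)) := by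
          gcongr
      _ = _ := by ring)
  have hg : ∀ v : E, ∫ u, gau 1 (u - v) = 1 := fun v => by
    rw [integral_sub_right_eq_self (fun z => gau 1 z), gau_integral one_pos]
  have hq : ∀ v : E, ∫ u, ‖u - v‖ ^ 2 * gau 1 (u - v) = ∫ u : E, ‖u‖ ^ 2 * gau 1 u := fun v =>
    integral_sub_right_eq_self (fun z => ‖z‖ ^ 2 * gau 1 z) v
  have e3 : ∀ x : E, ∫ u, X.p x * (d * gau 1 (u - x) + ‖u - x‖ ^ 2 * gau 1 (u - x)
      + R ^ 2 * gau 1 (u - x)) = X.p x * (d + (∫ u : E, ‖u‖ ^ 2 * gau 1 u) + R ^ 2) := by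
    intro x
    have I6 : Integrable (fun u : E => d * gau 1 (u - x) + ‖u - x‖ ^ 2 * gau 1 (u - x)) :=
      ((I2 x).const_mul d).add (I1 x)
    rw [integral_const_mul, integral_add I6 ((I2 x).const_mul _),
      integral_add ((I2 x).const_mul d) (I1 x), integral_const_mul, integral_const_mul, hg, hq]
    ring
  have e4 : ∫ u, ((∑ x ∈ X.s, X.p x * (d * gau 1 (u - x) + ‖u - x‖ ^ 2 * gau 1 (u - x)
      + R ^ 2 * gau 1 (u - x)) - X.g 1 u) + gau 1 u) = d + (∫ u : E, ‖u‖ ^ 2 * gau 1 u) + R ^ 2 := by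
    rw [integral_add I4 (gau_integrable one_pos), integral_sub (integrable_finsetSum _ fun x _ => I3 x)
      (X.g_integrable one_pos), integral_finsetSum _ fun x _ => I3 x, X.g_integral one_pos,
      gau_integral one_pos]
    simp_rw [e3]
    rw [← Finset.sum_mul, X.sum]
    ring
  exact m.trans e4.le

end Mix
end MixPart3

open MeasureTheory Real
open scoped BoundedContinuousFunction
set_option linter.unusedSectionVars false

namespace UIFS
variable {d : ℕ} (F : UIFS d)

lemma lam_pos : 0 < F.lam := F.hlam.1
lemma lam_lt : F.lam < 1 := F.hlam.2

/-- the linear map `(λ U)^k` -/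
noncomputable def Lk (k : ℕ) : EuclideanSpace ℝ (Fin d) ≃L[ℝ] EuclideanSpace ℝ (Fin d) :=
  (F.U ^ k).toContinuousLinearEquiv.trans (homo (F.lam ^ k) (pow_pos F.lam_pos k).ne')

lemma Lk_apply (k : ℕ) (x : EuclideanSpace ℝ (Fin d)) : F.Lk k x = F.lam ^ k • (F.U ^ k) x := rfl

lemma Lk_norm (k : ℕ) (x : EuclideanSpace ℝ (Fin d)) : ‖F.Lk k x‖ = F.lam ^ k * ‖x‖ := by
  rw [Lk_apply, norm_smul, norm_of_nonneg (pow_pos F.lam_pos k).le, LinearIsometryEquiv.norm_map]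

lemma Lk_add (a b : ℕ) (x : EuclideanSpace ℝ (Fin d)) : F.Lk (a + b) x = F.Lk a (F.Lk b x) := by
  simp only [Lk_apply, map_smul, pow_add, smul_smul]
  rw [mul_comm (F.lam ^ b)]
  rfl

lemma Lk_zero (x : EuclideanSpace ℝ (Fin d)) : F.Lk 0 x = x := by
  simp [Lk_apply]

/-- one step measure -/
noncomputable def th : Measure (EuclideanSpace ℝ (Fin d)) :=
  ∑ i, ENNReal.ofReal (F.p i) • Measure.dirac (F.a i)

instance : IsProbabilityMeasure F.th := by
  constructor
  unfold th
  rw [Measure.finsetSum_apply]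
  simp only [Measure.smul_apply, measure_univ, smul_eq_mul, mul_one]
  rw [← ENNReal.ofReal_sum_of_nonneg fun x hx => (F.hp x).le, F.hsum, ENNReal.ofReal_one]

lemma lintegral_th (f : EuclideanSpace ℝ (Fin d) → ENNReal) (hf : Measurable f) :
    ∫⁻ x, f x ∂F.th = ∑ i, ENNReal.ofReal (F.p i) * f (F.a i) := by
  unfold th
  rw [lintegral_finsetSum_measure]
  refine Finset.sum_congr rfl fun i _ => ?_
  rw [lintegral_smul_measure, lintegral_dirac' _ hf, smul_eq_mul]

/-- `k` step measure -/
noncomputable def N : ℕ → Measure (EuclideanSpace ℝ (Fin d))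
  | 0 => Measure.dirac 0
  | k + 1 => (N k).conv (F.th.map (F.Lk k))

instance N_prob (k : ℕ) : IsProbabilityMeasure (F.N k) := by
  induction k with
  | zero => unfold N; infer_instance
  | succ k ih => unfold N; infer_instance

lemma map_map_Lk (a b : ℕ) (ρ : Measure (EuclideanSpace ℝ (Fin d))) :
    (ρ.map (F.Lk b)).map (F.Lk a) = ρ.map (F.Lk (a + b)) := by
  rw [Measure.map_map (F.Lk a).continuous.measurable (F.Lk b).continuous.measurable]
  congr 1
  ext1 x
  exact (F.Lk_add a b x).symm

lemma map_conv_Lk (a : ℕ) (ρ ρ' : Measure (EuclideanSpace ℝ (Fin d))) [IsProbabilityMeasure ρ]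
    [IsProbabilityMeasure ρ'] :
    (ρ.conv ρ').map (F.Lk a) = (ρ.map (F.Lk a)).conv (ρ'.map (F.Lk a)) :=
  Measure.map_conv_continuousLinearMap (μ := ρ) (ν := ρ')
    (F.Lk a : EuclideanSpace ℝ (Fin d) →L[ℝ] EuclideanSpace ℝ (Fin d))

lemma N_add (a k : ℕ) : F.N (a + k) = (F.N a).conv ((F.N k).map (F.Lk a)) := by
  induction k with
  | zero =>
    simp only [Nat.add_zero]
    conv_rhs => rw [N]
    rw [Measure.map_dirac' (F.Lk a).continuous.measurable, map_zero, Measure.conv_dirac_zero]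
  | succ k ih =>
    rw [← Nat.add_assoc, N, ih]
    conv_rhs => rw [N]
    rw [map_conv_Lk, map_map_Lk, Measure.conv_assoc]

lemma mu_eq (μ : Measure (EuclideanSpace ℝ (Fin d))) [IsProbabilityMeasure μ]
    (hss : μ = ∑ i, ENNReal.ofReal (F.p i) • Measure.map (F.S i) μ) :
    μ = F.th.conv (μ.map (F.Lk 1)) := by
  conv_lhs => rw [hss]
  refine Measure.ext_of_lintegral _ fun f hf => ?_
  rw [Measure.lintegral_conv hf, lintegral_finsetSum_measure, F.lintegral_th]
  · refine Finset.sum_congr rfl fun i _ => ?_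
    have hS : Measurable (F.S i) := by
      unfold S
      have := F.U.continuous
      exact Continuous.measurable (by fun_prop)
    rw [lintegral_smul_measure, lintegral_map hf hS, smul_eq_mul,
      lintegral_map (by fun_prop) (F.Lk 1).continuous.measurable]
    congr 1
    refine lintegral_congr fun x => ?_
    simp only [S, Lk_apply, pow_one]
    rw [add_comm]
  · exact Measurable.lintegral_prod_right' (f := fun q : _ × _ => f (q.1 + q.2)) (by fun_prop)

lemma mu_N (μ : Measure (EuclideanSpace ℝ (Fin d))) [IsProbabilityMeasure μ]
    (hss : μ = ∑ i, ENNReal.ofReal (F.p i) • Measure.map (F.S i) μ) (k : ℕ) :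
    μ = (F.N k).conv (μ.map (F.Lk k)) := by
  induction k with
  | zero =>
    have : (F.Lk 0 : _ → EuclideanSpace ℝ (Fin d)) = id := by ext1 x; exact F.Lk_zero x
    rw [N, this, Measure.map_id, Measure.dirac_zero_conv]
  | succ k ih =>
    rw [N, ← map_map_Lk, Measure.conv_assoc, ← map_conv_Lk, ← F.mu_eq μ hss]
    exact ih

lemma pt_snoc (k : ℕ) (j : Fin k → Fin F.m) (i : Fin F.m) :
    F.pt (Fin.snoc j i : Fin (k + 1) → Fin F.m) = F.pt j + F.Lk k (F.a i) := by
  unfold pt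
  rw [Fin.sum_univ_castSucc]
  simp [Lk_apply]

lemma lintegral_N (k : ℕ) (f : EuclideanSpace ℝ (Fin d) → ENNReal) (hf : Measurable f) :
    ∫⁻ x, f x ∂F.N k = ∑ j : Fin k → Fin F.m, ENNReal.ofReal (∏ t, F.p (j t)) * f (F.pt j) := by
  induction k generalizing f with
  | zero =>
    rw [N, lintegral_dirac' _ hf]
    simp [pt]
  | succ k ih =>
    have hf2 : Measurable fun x => ∫⁻ y, f (x + y) ∂(F.th.map (F.Lk k)) :=
      Measurable.lintegral_prod_right' (f := fun q : _ × _ => f (q.1 + q.2)) (by fun_prop)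
    rw [N, Measure.lintegral_conv hf, ih _ hf2]
    rw [← (Fin.snocEquiv (fun _ => Fin F.m)).sum_comp, Fintype.sum_prod_type_right]
    refine Finset.sum_congr rfl fun j _ => ?_
    rw [lintegral_map (by fun_prop) (F.Lk k).continuous.measurable, F.lintegral_th _ (by
      have := (F.Lk k).continuous.measurable; fun_prop), Finset.mul_sum]
    refine Finset.sum_congr rfl fun i _ => ?_
    have e : (Fin.snocEquiv (fun _ : Fin (k + 1) => Fin F.m)) (i, j) = Fin.snoc j i := rfl
    rw [e, pt_snoc, Fin.prod_univ_castSucc]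
    simp only [Fin.snoc_castSucc, Fin.snoc_last]
    rw [ENNReal.ofReal_mul (Finset.prod_nonneg fun t _ => (F.hp _).le), mul_assoc]

open Classical in
/-- the mixture -/
noncomputable def mix (k : ℕ) : Mix (EuclideanSpace ℝ (Fin d)) where
  s := Finset.image (fun j : Fin k → Fin F.m => F.pt j) Finset.univ
  p := F.weight k
  pos := by
    intro x hx
    obtain ⟨j, _, rfl⟩ := Finset.mem_image.1 hx
    unfold weight
    refine Finset.sum_pos' (fun j _ => ?_) ⟨j, Finset.mem_univ _, ?_⟩
    · split_ifs
      · exact Finset.prod_nonneg fun t _ => (F.hp _).le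
      · exact le_rfl
    · rw [if_pos rfl]
      exact Finset.prod_pos fun t _ => F.hp _
  sum := by
    unfold weight
    rw [Finset.sum_comm]
    have : ∀ j : Fin k → Fin F.m, ∑ x ∈ Finset.image (fun j : Fin k → Fin F.m => F.pt j) Finset.univ,
        (if F.pt j = x then ∏ t, F.p (j t) else 0) = ∏ t, F.p (j t) := by
      intro j
      rw [Finset.sum_ite_eq, if_pos (Finset.mem_image_of_mem _ (Finset.mem_univ j))]
    have h2 : ∏ _t : Fin k, ∑ i, F.p i = ∑ j : Fin k → Fin F.m, ∏ t, F.p (j t) :=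
      Finset.prod_univ_sum (fun _ => Finset.univ) (fun _ i => F.p i) |>.trans (by
        rw [Fintype.piFinset_univ])
    rw [F.hsum, Finset.prod_const_one] at h2
    rw [h2]
    refine Finset.sum_congr rfl fun j _ => ?_
    convert this j

lemma mix_meas (k : ℕ) : (F.mix k).meas = F.N k := by
  classical
  refine Measure.ext_of_lintegral _ fun f hf => ?_
  rw [F.lintegral_N k f hf]
  unfold Mix.meas
  rw [lintegral_finsetSum_measure]
  simp only [lintegral_smul_measure, lintegral_dirac' _ hf, smul_eq_mul]
  have : ∀ j : Fin k → Fin F.m, ENNReal.ofReal (∏ t, F.p (j t)) * f (F.pt j) =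
      ∑ x ∈ (F.mix k).s, if F.pt j = x then ENNReal.ofReal (∏ t, F.p (j t)) * f x else 0 := by
    intro j
    rw [Finset.sum_ite_eq, if_pos]
    have := Finset.mem_image_of_mem (fun j : Fin k → Fin F.m => F.pt j) (Finset.mem_univ j)
    unfold mix
    convert this
  simp_rw [this]
  rw [Finset.sum_comm]
  refine Finset.sum_congr rfl fun x _ => ?_
  have e : (F.mix k).p x = ∑ j : Fin k → Fin F.m, if F.pt j = x then ∏ t, F.p (j t) else 0 := by
    show F.weight k x = _
    unfold weight
    refine Finset.sum_congr rfl fun j _ => ?_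
    congr
  rw [e, ENNReal.ofReal_sum_of_nonneg, Finset.sum_mul]
  · refine Finset.sum_congr rfl fun j _ => ?_
    split_ifs <;> simp
  · intro j _
    split_ifs
    · exact Finset.prod_nonneg fun t _ => (F.hp _).le
    · exact le_rfl

lemma mix_ent (k : ℕ) : ∑ x ∈ (F.mix k).s, negMulLog ((F.mix k).p x) = F.Hk k := by
  unfold Hk mix
  simp only
  congr!

lemma mix_mem {k : ℕ} {x : EuclideanSpace ℝ (Fin d)} (hx : x ∈ (F.mix k).s) :
    ∃ j : Fin k → Fin F.m, F.pt j = x := by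
  classical
  obtain ⟨j, _, h⟩ := Finset.mem_image.1 hx
  exact ⟨j, h⟩

lemma mix_card (k : ℕ) : (F.mix k).s.card ≤ F.m ^ k := by
  unfold mix
  refine Finset.card_image_le.trans ?_
  simp

lemma mix_sep {k : ℕ} {x x' : EuclideanSpace ℝ (Fin d)} (hx : x ∈ (F.mix k).s)
    (hx' : x' ∈ (F.mix k).s) (h : x ≠ x') : F.sep k ≤ ‖x - x'‖ := by
  unfold sep
  refine csInf_le ⟨0, ?_⟩ ⟨x, F.mix_mem hx, x', F.mix_mem hx', h, (dist_eq_norm _ _).symm⟩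
  rintro e ⟨a, _, b, _, _, rfl⟩
  exact dist_nonneg

lemma mix_norm : ∃ R : ℝ, ∀ k, ∀ x ∈ (F.mix k).s, ‖x‖ ≤ R := by
  refine ⟨(∑ i, ‖F.a i‖) * (1 - F.lam)⁻¹, fun k x hx => ?_⟩
  obtain ⟨j, rfl⟩ := F.mix_mem hx
  unfold pt
  have hl := F.lam_pos
  have hl1 := F.lam_lt
  calc ‖∑ t : Fin k, F.lam ^ (t : ℕ) • (F.U ^ (t : ℕ)) (F.a (j t))‖
      ≤ ∑ t : Fin k, F.lam ^ (t : ℕ) * (∑ i, ‖F.a i‖) := by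
        refine norm_sum_le_of_le _ fun t _ => ?_
        rw [norm_smul, norm_of_nonneg (by positivity), LinearIsometryEquiv.norm_map]
        gcongr
        exact Finset.single_le_sum (f := fun i => ‖F.a i‖) (fun i _ => norm_nonneg _) (Finset.mem_univ _)
    _ = (∑ i, ‖F.a i‖) * ∑ t ∈ Finset.range k, F.lam ^ t := by
        rw [← Finset.sum_mul, mul_comm, Finset.sum_range]
    _ ≤ _ := by
        refine mul_le_mul_of_nonneg_left ?_ (Finset.sum_nonneg fun i _ => norm_nonneg _)
        exact (summable_geometric_of_lt_one hl.le hl1).sum_le_tsum _ (fun i _ => by positivity) |>.trans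
          (tsum_geometric_of_lt_one hl.le hl1).le

end UIFS

open MeasureTheory Real
open scoped BoundedContinuousFunction
set_option linter.unusedSectionVars false

namespace UIFS
variable {d : ℕ} (F : UIFS d)

lemma sep_lower (h1 : 1 < F.splittingRate) (h2 : F.splittingRate < ⊤) {L : ℝ}
    (hL : log F.splittingRate.toReal < L) :
    ∀ᶠ k : ℕ in Filter.atTop, exp (-L * k) ≤ F.sep k := by
  have hM : 0 < F.splittingRate.toReal :=
    ENNReal.toReal_pos (zero_lt_one.trans h1).ne' h2.ne
  have hlt : F.splittingRate < ENNReal.ofReal (exp L) := by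
    rw [← ENNReal.ofReal_toReal h2.ne]
    refine (ENNReal.ofReal_lt_ofReal_iff (exp_pos _)).2 ?_
    rwa [← log_lt_iff_lt_exp hM]
  have hev := Filter.eventually_lt_of_limsup_lt hlt
  filter_upwards [hev, Filter.eventually_ge_atTop 1] with k hk hk1
  have hkpos : (0 : ℝ) < k := by exact_mod_cast hk1
  have hneg : -(1 : ℝ) / k < 0 := div_neg_of_neg_of_pos (by norm_num) hkpos
  have hsep : 0 < F.sep k := by
    by_contra hc
    rw [ENNReal.ofReal_of_nonpos (not_lt.1 hc), ENNReal.zero_rpow_of_neg hneg] at hk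
    exact not_top_lt hk
  rw [ENNReal.ofReal_rpow_of_pos hsep, ENNReal.ofReal_lt_ofReal_iff (exp_pos _),
    ← log_lt_iff_lt_exp (rpow_pos_of_pos hsep _), log_rpow hsep] at hk
  rw [← le_log_iff_exp_le hsep]
  have h3 : -(1 : ℝ) / k * log (F.sep k) * k < L * k := by gcongr
  have h4 : -(1 : ℝ) / k * log (F.sep k) * k = - log (F.sep k) := by field_simp
  linarith

lemma Hk_nonneg (k : ℕ) : 0 ≤ F.Hk k := by
  rw [← F.mix_ent]
  exact Finset.sum_nonneg fun x hx => negMulLog_nonneg ((F.mix k).pos x hx).le ((F.mix k).p_le hx)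

lemma Hk_lower {h : ℝ} (hh : h < F.garsiaEntropy) :
    ∀ᶠ k : ℕ in Filter.atTop, h * k ≤ F.Hk k := by
  have hb : Filter.IsBoundedUnder (· ≥ ·) Filter.atTop (fun k : ℕ => F.Hk k / k) :=
    Filter.isBoundedUnder_of ⟨0, fun k => div_nonneg (F.Hk_nonneg k) (Nat.cast_nonneg k)⟩
  have hev := Filter.eventually_lt_of_lt_liminf hh hb
  filter_upwards [hev, Filter.eventually_ge_atTop 1] with k hk hk1
  have hkpos : (0 : ℝ) < k := by exact_mod_cast hk1
  exact ((lt_div_iff₀ hkpos).1 hk).le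

lemma H_asym (h1 : 1 < F.splittingRate) (h2 : F.splittingRate < ⊤) {L h : ℝ}
    (hL : log F.splittingRate.toReal < L) (hh : h < F.garsiaEntropy) :
    ∃ C : ℝ, ∃ k0 : ℕ, (∀ k, (F.mix k).H 1 ≤ C) ∧
      ∀ k ≥ k0, (h - d * L) * k - C ≤ (F.mix k).H (exp (-2 * L * k)) := by
  obtain ⟨L1, hL1, hL2⟩ := exists_between hL
  set δ := L - L1 with hδ
  have hδp : 0 < δ := by rw [hδ]; linarith
  set c := log F.m with hc
  obtain ⟨R, hR⟩ := F.mix_norm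
  obtain ⟨k0, hk0⟩ := Filter.eventually_atTop.1 ((F.sep_lower h1 h2 hL1).and (F.Hk_lower hh))
  set C1 := (Module.finrank ℝ (EuclideanSpace ℝ (Fin d)) : ℝ) / 2 * log (2 * π)
    + (∫ u : EuclideanSpace ℝ (Fin d), ‖u‖ ^ 2 * gau 1 u) + R ^ 2 with hC1
  refine ⟨|C1| + 2 * exp (4 * c ^ 2 / δ ^ 2), k0, fun k => ?_, fun k hk => ?_⟩
  · have := (F.mix k).H_upper (hR k)
    have h3 := le_abs_self C1
    have := exp_pos (4 * c ^ 2 / δ ^ 2)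
    linarith
  · obtain ⟨hs, hH⟩ := hk0 k hk
    have hlow := (F.mix k).H_lower (y := exp (-2 * L * k)) (exp_pos _) (exp_pos (-L1 * k))
      (fun x hx x' hx' hne => hs.trans (F.mix_sep hx hx' hne))
    rw [F.mix_ent, log_mul (by positivity) (exp_pos _).ne', log_exp, finrank_euclideanSpace,
      Fintype.card_fin] at hlow
    have hl : 0 ≤ (d : ℝ) / 2 * log (2 * π) := by
      have : 0 ≤ log (2 * π) := log_nonneg (by linarith [pi_gt_three])
      positivity
    have e1 : exp (-L1 * k) ^ 2 / (8 * exp (-2 * L * k)) = exp (2 * δ * k) / 8 := by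
      rw [← exp_nat_mul, div_mul_eq_div_div_swap, ← exp_sub]
      congr 2
      rw [hδ]; push_cast; ring
    rw [e1] at hlow
    have e2 : 2 * δ ^ 2 * k ^ 2 ≤ exp (2 * δ * k) := by
      have h0 : (0 : ℝ) ≤ 2 * δ * k := by positivity
      have := quadratic_le_exp_of_nonneg h0
      nlinarith
    have hm : (0 : ℝ) < F.m := by exact_mod_cast F.hm
    have e4 : exp (-(exp (2 * δ * k) / 8)) ≤ exp (-(δ ^ 2 * k ^ 2 / 4)) := by
      rw [exp_le_exp]; linarith
    have e3 : 2 * ((F.mix k).s.card : ℝ) ^ 2 * exp (-(exp (2 * δ * k) / 8))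
        ≤ 2 * exp (4 * c ^ 2 / δ ^ 2) := by
      have hcard : ((F.mix k).s.card : ℝ) ≤ exp (c * k) := by
        have : ((F.mix k).s.card : ℝ) ≤ (F.m : ℝ) ^ k := by exact_mod_cast F.mix_card k
        refine this.trans (le_of_eq ?_)
        rw [mul_comm, exp_nat_mul, hc, exp_log hm]
      calc _ ≤ 2 * exp (c * k) ^ 2 * exp (-(δ ^ 2 * k ^ 2 / 4)) := by
              gcongr
        _ = 2 * exp (2 * c * k - δ ^ 2 * k ^ 2 / 4) := by
              rw [← exp_nat_mul, mul_assoc, ← exp_add]; congr 2; push_cast; ring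
        _ ≤ _ := by
              gcongr
              have hid : 4 * c ^ 2 / δ ^ 2 - (2 * c * k - δ ^ 2 * k ^ 2 / 4)
                = (δ * k / 2 - 2 * c / δ) ^ 2 := by field_simp; ring
              nlinarith [sq_nonneg (δ * k / 2 - 2 * c / δ)]
    have := abs_nonneg C1
    linarith

lemma ent_le (h1 : 1 < F.splittingRate) (h2 : F.splittingRate < ⊤) :
    F.garsiaEntropy ≤ d * log F.splittingRate.toReal := by
  have hM : 0 < log F.splittingRate.toReal := by
    refine log_pos ?_
    have := (ENNReal.toReal_lt_toReal ENNReal.one_ne_top h2.ne).2 h1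
    simpa using this
  refine le_of_forall_pos_le_add fun e he => ?_
  set η := e / (d + 2) with hη
  have hηp : 0 < η := by positivity
  obtain ⟨C, k0, hC, hk⟩ := F.H_asym h1 h2 (L := log F.splittingRate.toReal + η)
    (h := F.garsiaEntropy - η) (by linarith) (by linarith)
  set X := F.garsiaEntropy - η - d * (log F.splittingRate.toReal + η) with hX
  have key : X ≤ 0 := by
    by_contra hc
    push Not at hc
    obtain ⟨n, hn⟩ := exists_nat_gt ((2 * C) / X)
    have hn' : 2 * C / X < (max n k0 : ℕ) := hn.trans_le (by exact_mod_cast le_max_left n k0)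
    have a1 := hk (max n k0) (le_max_right _ _)
    have a2 : (F.mix (max n k0)).H (exp (-2 * (log F.splittingRate.toReal + η) * (max n k0 : ℕ)))
        ≤ (F.mix (max n k0)).H 1 := by
      refine (F.mix _).H_mono (exp_pos _) ?_
      rw [exp_le_one_iff]
      have : 0 ≤ (log F.splittingRate.toReal + η) * ((max n k0 : ℕ) : ℝ) := by positivity
      linarith
    have a3 := hC (max n k0)
    rw [div_lt_iff₀ hc] at hn'
    linarith
  have : η * (d + 2) = e := by rw [hη]; field_simp
  nlinarith

end UIFS

open MeasureTheory Real
open scoped BoundedContinuousFunction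
set_option linter.unusedSectionVars false

section
variable {E : Type*} [NormedAddCommGroup E] [InnerProductSpace ℝ E] [FiniteDimensional ℝ E]
  [MeasurableSpace E] [BorelSpace E]

lemma cj_mul (L : E ≃L[ℝ] E) (A B : OpB E) :
    (compOp L.symm * A * compOp L) * (compOp L.symm * B * compOp L)
      = compOp L.symm * (A * B) * compOp L := by
  calc _ = compOp L.symm * A * (compOp L * compOp L.symm) * B * compOp L := by
        simp only [mul_assoc]
    _ = _ := by rw [compOp_mul_symm, mul_one, mul_assoc _ A B]

lemma cj_sub (L : E ≃L[ℝ] E) (A : OpB E) :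
    (compOp L.symm * A * compOp L) - 1 = compOp L.symm * (A - 1) * compOp L := by
  rw [mul_sub, sub_mul, mul_one, compOp_symm_mul]

lemma cj_pow (L : E ≃L[ℝ] E) (A : OpB E) (n : ℕ) :
    (compOp L.symm * A * compOp L) ^ n = compOp L.symm * A ^ n * compOp L := by
  induction n with
  | zero => rw [pow_zero, pow_zero, mul_one, compOp_symm_mul]
  | succ n ih => rw [pow_succ, ih, cj_mul, pow_succ]

end

namespace UIFS
variable {d : ℕ} (F : UIFS d)

/-- minus log of the ratio -/
noncomputable def ell : ℝ := -log F.lam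

lemma ell_pos : 0 < F.ell := by
  have := log_neg F.lam_pos F.lam_lt
  unfold ell; linarith

lemma lam_pow (k : ℕ) : F.lam ^ k = exp (-F.ell * k) := by
  rw [ell, neg_neg, mul_comm, exp_nat_mul, exp_log F.lam_pos]

lemma gm_Lk (t : ℝ) (a : ℕ) :
    (gm (exp (-2 * (t - a * F.ell))) : Measure (EuclideanSpace ℝ (Fin d))).map (F.Lk a)
      = gm (exp (-2 * t)) := by
  rw [gm_map (exp_pos _) (pow_pos F.lam_pos a) (F.Lk a) (F.Lk_norm a), F.lam_pow, ← exp_nat_mul,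
    ← exp_add]
  congr 2
  push_cast; ring

lemma block_step {t B : ℝ} {a k : ℕ}
    (hB : (F.mix k).H (exp (-2 * (t - ((a + 1 : ℕ) : ℝ) * F.ell)))
      - (F.mix k).H (exp (-2 * (t - (a : ℝ) * F.ell))) ≤ B) :
    ∃ n : EuclideanSpace ℝ (Fin d) → ℝ,
      (∀ z, ‖Cop (F.N ((a + 1) + k)) * Cop (gm (exp (-2 * t))) * (Cop (Measure.dirac z) - 1)‖ ≤ n z) ∧
      ∀ w > 0, Integrable (fun z => n z ^ 2) (gm w) ∧
        ∫ z, n z ^ 2 ∂gm w ≤ 2 * (w / exp (-2 * t)) * (B / (1 - F.lam ^ 2)) := by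
  set X := F.mix k with hX
  set y1 := exp (-2 * (t - ((a + 1 : ℕ) : ℝ) * F.ell)) with hy1
  set y0 := exp (-2 * (t - (a : ℝ) * F.ell)) with hy0
  set L := F.Lk (a + 1) with hLdef
  have hy1p : 0 < y1 := exp_pos _
  have hl2 : F.lam ^ 2 < 1 := by have := F.lam_pos; have := F.lam_lt; nlinarith
  have hy01 : y0 = F.lam ^ 2 * y1 := by
    rw [F.lam_pow, hy1, hy0, ← exp_add]; congr 1; push_cast; ring
  have hgm : (gm y1 : Measure (EuclideanSpace ℝ (Fin d))).map L = gm (exp (-2 * t)) := F.gm_Lk t (a + 1)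
  have := gm_prob (E := EuclideanSpace ℝ (Fin d)) hy1p
  refine ⟨fun z => X.phi y1 (L.symm z), fun z => ?_, fun w hw => ?_⟩
  · rw [F.N_add, Cop_conv, ← hLdef, Cop_map, ← hgm, Cop_map]
    have hd : Cop (Measure.dirac z) = compOp L.symm * Cop (Measure.dirac (L.symm z)) * compOp L := by
      rw [← Cop_map, Measure.map_dirac' L.continuous.measurable, L.apply_symm_apply]
    rw [hd, cj_sub, mul_assoc (Cop _), cj_mul, mul_assoc (Cop _), cj_mul]
    refine (norm_mul_le_left (Cop_norm_le _)).trans ((conj_norm_le _ _).trans ?_)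
    rw [← F.mix_meas]
    exact X.Cop_phi hy1p _
  · set c := F.lam ^ (a + 1) with hc
    have hcp : 0 < c := pow_pos F.lam_pos _
    have hgw : (gm (w / c ^ 2) : Measure (EuclideanSpace ℝ (Fin d))).map L = gm w := by
      rw [gm_map (by positivity) hcp L (F.Lk_norm (a + 1))]
      congr 1; field_simp
    have hemb : MeasurableEmbedding L := L.toHomeomorph.measurableEmbedding
    have hint := X.Q_integrable hy1p (w := w / c ^ 2) (by positivity)
    rw [← hgw]
    constructor
    · rw [hemb.integrable_map_iff]
      convert hint using 2 with z
      simp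
    · rw [hemb.integral_map]
      simp only [ContinuousLinearEquiv.symm_apply_apply]
      have hq := X.Q_bound (y0 := y0) (y1 := y1) (exp_pos _) (by rw [hy01]; nlinarith)
        (w := w / c ^ 2) (by positivity)
      refine hq.trans ?_
      have e1 : y1 - y0 = (1 - F.lam ^ 2) * y1 := by rw [hy01]; ring
      have e2 : exp (-2 * t) = c ^ 2 * y1 := by
        rw [hc, F.lam_pow, ← exp_nat_mul, hy1, ← exp_add]; congr 1; push_cast; ring
      have h1 : 0 < 1 - F.lam ^ 2 := by linarith
      rw [e1, e2]
      calc _ = (X.H y1 - X.H y0) * (2 * w / (c ^ 2 * y1 * (1 - F.lam ^ 2))) := by field_simp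
        _ ≤ B * (2 * w / (c ^ 2 * y1 * (1 - F.lam ^ 2))) := by gcongr
        _ = _ := by field_simp

end UIFS

open MeasureTheory Real
open scoped BoundedContinuousFunction
set_option linter.unusedSectionVars false

namespace UIFS
variable {d : ℕ} (F : UIFS d)

lemma block {L h C β ε r : ℝ} {k0 : ℕ} (hC : ∀ k, (F.mix k).H 1 ≤ C)
    (hk : ∀ k ≥ k0, (h - d * L) * k - C ≤ (F.mix k).H (exp (-2 * L * k)))
    (hL : 0 < L) (hβ : 0 < β) (hε : d * L - h < ε) (hε0 : 0 < ε) (hr : 0 < r)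
    (hr1 : r < 1 - (1 + β) * F.ell / L) :
    ∃ t0 : ℝ, 0 < t0 ∧ ∀ t ≥ t0, ∃ K : ℕ, ∃ n : EuclideanSpace ℝ (Fin d) → ℝ,
      (∀ z, ‖Cop (F.N K) * Cop (gm (exp (-2 * t))) * (Cop (Measure.dirac z) - 1)‖ ≤ n z) ∧
      (∀ w > 0, Integrable (fun z => n z ^ 2) (gm w) ∧
        ∫ z, n z ^ 2 ∂gm w ≤ 2 * (w / exp (-2 * t)) * (ε / β / (1 - F.lam ^ 2))) ∧
      r * t ≤ t - K * F.ell := by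
  have hl := F.ell_pos
  set g := 1 - (1 + β) * F.ell / L - r with hg
  have hgp : 0 < g := by rw [hg]; linarith
  set e := ε - (d * L - h) with he
  have hep : 0 < e := by rw [he]; linarith
  refine ⟨1 + L * k0 + L * |2 * C / e| + (2 + β) * F.ell / g, by positivity, fun t ht => ?_⟩
  have p1 : 0 ≤ L * k0 := by positivity
  have p2 : 0 ≤ L * |2 * C / e| := by positivity
  have p3 : 0 ≤ (2 + β) * F.ell / g := by positivity
  have htp : 0 < t := by linarith
  set k := ⌈t / L⌉₊ with hkd
  have k1 : t / L ≤ k := Nat.le_ceil _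
  have k2 : (k : ℝ) < t / L + 1 := Nat.ceil_lt_add_one (by positivity)
  have k1' : t ≤ k * L := (div_le_iff₀ hL).1 k1
  have hkp : 0 < (k : ℝ) := lt_of_lt_of_le (by positivity) k1
  have hkk0 : k0 ≤ k := by
    have : (k0 : ℝ) * L ≤ k * L := by linarith
    exact_mod_cast le_of_mul_le_mul_right this hL
  have hkC : 2 * C ≤ e * k := by
    have : |2 * C / e| * L ≤ k * L := by linarith
    have h1 := le_of_mul_le_mul_right this hL
    have h2 := (le_abs_self _).trans h1
    rw [div_le_iff₀ hep] at h2
    linarith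
  set n := ⌈β * k⌉₊ with hnd
  have n1 : β * k ≤ n := Nat.le_ceil _
  have n2 : (n : ℝ) < β * k + 1 := Nat.ceil_lt_add_one (by positivity)
  have hnp : 0 < (n : ℝ) := lt_of_lt_of_le (by positivity) n1
  have hKl : ((n : ℝ) + k) * F.ell ≤ t - r * t := by
    have h1 : (n : ℝ) + k ≤ (1 + β) * (t / L) + (2 + β) := by nlinarith
    have h2 : ((n : ℝ) + k) * F.ell ≤ ((1 + β) * (t / L) + (2 + β)) * F.ell := by gcongr
    have h3 : (2 + β) * F.ell ≤ t * g := (div_le_iff₀ hgp).1 (by linarith)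
    have h4 : t * g = t - (1 + β) * (t / L) * F.ell - r * t := by rw [hg]; field_simp
    linarith
  have hnl : (n : ℝ) * F.ell ≤ t := by nlinarith
  set f : ℕ → ℝ := fun a => (F.mix k).H (exp (-2 * (t - (a : ℝ) * F.ell))) with hf
  have hsum : ∑ a ∈ Finset.range n, (f (a + 1) - f a) ≤ ε * k := by
    rw [Finset.sum_range_sub]
    have a1 : f n ≤ C := by
      refine le_trans ((F.mix k).H_mono (exp_pos _) ?_) (hC k)
      rw [exp_le_one_iff]; linarith
    have a2 : (h - d * L) * k - C ≤ f 0 := by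
      refine (hk k hkk0).trans ((F.mix k).H_mono (exp_pos _) ?_)
      rw [exp_le_exp]; push_cast; linarith
    have : e * k = ε * k - (d * L - h) * k := by rw [he]; ring
    linarith
  have hex : ∃ a ∈ Finset.range n, f (a + 1) - f a ≤ ε / β := by
    by_contra hcon
    push Not at hcon
    have hne : (Finset.range n).Nonempty := by
      rw [Finset.nonempty_range_iff]; exact_mod_cast hnp.ne'
    have := Finset.sum_lt_sum_of_nonempty hne hcon
    rw [Finset.sum_const, Finset.card_range, nsmul_eq_mul] at this
    have h5 : ε * k ≤ n * (ε / β) := by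
      calc ε * k = β * k * (ε / β) := by field_simp
        _ ≤ _ := by gcongr
    linarith
  obtain ⟨a, ha, hinc⟩ := hex
  obtain ⟨nn, h1, h2⟩ := F.block_step (t := t) (a := a) (k := k) hinc
  refine ⟨a + 1 + k, nn, h1, h2, ?_⟩
  have han : ((a + 1 : ℕ) : ℝ) ≤ n := by exact_mod_cast Finset.mem_range.1 ha
  have : (((a + 1 + k : ℕ) : ℝ)) * F.ell ≤ ((n : ℝ) + k) * F.ell := by
    push_cast at han ⊢; gcongr
  linarith

lemma pair {A r t0 : ℝ} (hr : 0 < r) (hr1 : r ≤ 1) (ht0 : 0 < t0)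
    (hb : ∀ t ≥ t0, ∃ K : ℕ, ∃ n : EuclideanSpace ℝ (Fin d) → ℝ,
      (∀ z, ‖Cop (F.N K) * Cop (gm (exp (-2 * t))) * (Cop (Measure.dirac z) - 1)‖ ≤ n z) ∧
      (∀ w > 0, Integrable (fun z => n z ^ 2) (gm w) ∧
        ∫ z, n z ^ 2 ∂gm w ≤ 2 * (w / exp (-2 * t)) * A) ∧
      r * t ≤ t - K * F.ell) {t : ℝ} (ht : t0 ≤ r * t) :
    ∃ K : ℕ, (∀ w > 0, ‖Cop (F.N K) * Cop (gm (2 * exp (-2 * t))) * (Cop (gm w) - 1)‖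
      ≤ A * (w / exp (-2 * t))) ∧ r ^ 2 * t ≤ t - K * F.ell := by
  have htt : t0 ≤ t := by
    have : 0 < t := by
      by_contra hc
      have := mul_nonpos_of_nonneg_of_nonpos hr.le (not_lt.1 hc)
      linarith
    nlinarith
  obtain ⟨K1, n1, a1, b1, c1⟩ := hb t htt
  obtain ⟨K2, n2, a2, b2, c2⟩ := hb (t - K1 * F.ell) (by linarith)
  refine ⟨K1 + K2, fun w hw => ?_, ?_⟩
  · have i1 := gm_prob (E := EuclideanSpace ℝ (Fin d)) (exp_pos (-2 * t))
    have i2 := gm_prob (E := EuclideanSpace ℝ (Fin d)) hw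
    have i3 := gm_prob (E := EuclideanSpace ℝ (Fin d)) (exp_pos (-2 * (t - K1 * F.ell)))
    set L := F.Lk K1 with hL
    set c := F.lam ^ K1 with hc
    have hcp : 0 < c := pow_pos F.lam_pos _
    have hgm : (gm (exp (-2 * (t - K1 * F.ell))) : Measure (EuclideanSpace ℝ (Fin d))).map L
      = gm (exp (-2 * t)) := F.gm_Lk t K1
    have hgw : (gm (w / c ^ 2) : Measure (EuclideanSpace ℝ (Fin d))).map L = gm w := by
      rw [gm_map (by positivity) hcp L (F.Lk_norm K1)]
      congr 1; field_simp
    have hemb : MeasurableEmbedding L := L.toHomeomorph.measurableEmbedding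
    have e2 : exp (-2 * t) = c ^ 2 * exp (-2 * (t - K1 * F.ell)) := by
      rw [hc, F.lam_pow, ← exp_nat_mul, ← exp_add]; congr 1; push_cast; ring
    obtain ⟨j2, q2⟩ := b2 (w / c ^ 2) (by positivity)
    obtain ⟨j1, q1⟩ := b1 w hw
    have key := pair_bound ((F.N K1).conv (gm (exp (-2 * t))))
      (((F.N K2).map L).conv (gm (exp (-2 * t)))) (gm w) (gm_neg w) n1 (fun z => n2 (L.symm z))
      (fun z => by rw [Cop_conv]; exact a1 z)
      (fun z => by
        rw [Cop_conv, Cop_map, ← hgm, Cop_map]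
        have hd : Cop (Measure.dirac z)
            = compOp L.symm * Cop (Measure.dirac (L.symm z)) * compOp L := by
          rw [← Cop_map, Measure.map_dirac' L.continuous.measurable, L.apply_symm_apply]
        rw [hd, cj_sub, cj_mul, cj_mul]
        exact (conj_norm_le _ _).trans (a2 _))
      j1
      (by
        rw [← hgw, hemb.integrable_map_iff]
        convert j2 using 2 with z
        simp)
      (2 * (w / exp (-2 * t)) * A) q1
      (by
        rw [← hgw, hemb.integral_map]
        simp only [ContinuousLinearEquiv.symm_apply_apply]
        refine q2.trans (le_of_eq ?_)
        rw [e2]; field_simp)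
    have e3 : Cop (F.N (K1 + K2)) * Cop (gm (2 * exp (-2 * t)))
        = Cop ((F.N K1).conv (gm (exp (-2 * t)))) * Cop (((F.N K2).map L).conv (gm (exp (-2 * t)))) := by
      rw [F.N_add, two_mul, ← gm_conv (exp_pos _) (exp_pos _), Cop_conv, Cop_conv, Cop_conv, Cop_conv,
        mul_assoc, ← mul_assoc (Cop (Measure.map _ _)), Cop_comm (Measure.map _ _) (gm _)]
      simp only [mul_assoc]
      rw [Cop_comm (Measure.map _ _) (gm _)]
    rw [e3]
    refine key.trans (le_of_eq ?_)
    ring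
  · push_cast
    have : r * (r * t) ≤ r * (t - K1 * F.ell) := by gcongr
    nlinarith

end UIFS

open MeasureTheory Real
open scoped BoundedContinuousFunction
set_option linter.unusedSectionVars false

namespace UIFS
variable {d : ℕ} (F : UIFS d)

lemma params (hMlb : 1 < F.splittingRate) (hMub : F.splittingRate < ⊤)
    (hineq : ((d : ℝ) * Real.log F.splittingRate.toReal - F.garsiaEntropy) *
        Real.log F.splittingRate.toReal ^ 2 <
      1 / 27 * (Real.log F.splittingRate.toReal - Real.log F.lam⁻¹) ^ 3 * F.lam ^ 4) :
    ∃ A r t0 : ℝ, 0 < A ∧ 0 < r ∧ r < 1 ∧ 2 * exp 1 * A < r ^ 2 ∧ 0 < t0 ∧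
      ∀ t : ℝ, t0 ≤ r * t →
        ∃ K : ℕ, (∀ w > 0, ‖Cop (F.N K) * Cop (gm (2 * exp (-2 * t))) * (Cop (gm w) - 1)‖
          ≤ A * (w / exp (-2 * t))) ∧ r ^ 2 * t ≤ t - K * F.ell := by
  set L := log F.splittingRate.toReal with hLd
  set h := F.garsiaEntropy with hh
  have hL : 0 < L := by
    refine log_pos ?_
    have := (ENNReal.toReal_lt_toReal ENNReal.one_ne_top hMub.ne).2 hMlb
    simpa using this
  have hε : h ≤ d * L := F.ent_le hMlb hMub
  set ε := d * L - h with hεd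
  have hε0 : 0 ≤ ε := by rw [hεd]; linarith
  have hl := F.ell_pos
  set l := F.ell with hld
  have hlinv : log F.lam⁻¹ = l := by rw [log_inv]; rfl
  rw [hlinv] at hineq
  have hlam := F.lam_pos
  have hlam1 := F.lam_lt
  set lam := F.lam with hlamd
  have hLl : 0 < L - l := by
    by_contra hc
    have h3 : (L - l) ^ 3 ≤ 0 := Odd.pow_nonpos (by decide) (not_lt.1 hc)
    have h4 : 0 ≤ ε * L ^ 2 := by positivity
    have h5 : 1 / 27 * (L - l) ^ 3 * lam ^ 4 ≤ 0 :=
      mul_nonpos_of_nonpos_of_nonneg (by linarith) (by positivity)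
    linarith
  set β := (L - l) / (3 * l) with hβd
  have hβ : 0 < β := by positivity
  set σ := (L - l) / L with hσd
  have hσ : 0 < σ := by positivity
  have hσ1 : σ < 1 := by rw [hσd, div_lt_one hL]; linarith
  have h1l : 2 * l * lam ^ 2 ≤ 1 - lam ^ 2 := by
    have e1 : lam ^ 2 = exp (-(2 * l)) := by rw [hlamd, F.lam_pow]; congr 1; push_cast; ring
    have e2 : 2 * l + 1 ≤ exp (2 * l) := add_one_le_exp _
    have e3 : exp (2 * l) * lam ^ 2 = 1 := by rw [e1, ← exp_add]; simp
    have : (2 * l + 1) * lam ^ 2 ≤ exp (2 * l) * lam ^ 2 := by gcongr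
    linarith
  have hlamsq : 0 < lam ^ 2 := by positivity
  have hlam2 : lam ^ 2 < 1 := by nlinarith
  have h1lp : 0 < 1 - lam ^ 2 := by linarith
  have hq0 : 2 * exp 1 * (ε / β / (1 - lam ^ 2)) < (2 / 3 * σ) ^ 2 := by
    have he : exp 1 < 4 := by linarith [exp_one_lt_d9]
    have hep : 0 < exp 1 := exp_pos 1
    have step1 : ε / β / (1 - lam ^ 2) ≤ ε / β / (2 * l * lam ^ 2) := by gcongr
    have step2 : ε / β / (2 * l * lam ^ 2) = (ε * L ^ 2) * (3 / (2 * (L - l) * lam ^ 2 * L ^ 2)) := by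
      rw [hβd]; field_simp
    have step3 : (ε * L ^ 2) * (3 / (2 * (L - l) * lam ^ 2 * L ^ 2))
        ≤ (1 / 27 * (L - l) ^ 3 * lam ^ 4) * (3 / (2 * (L - l) * lam ^ 2 * L ^ 2)) := by gcongr
    have step4 : (1 / 27 * (L - l) ^ 3 * lam ^ 4) * (3 / (2 * (L - l) * lam ^ 2 * L ^ 2))
        = σ ^ 2 * lam ^ 2 / 18 := by
      rw [hσd]; field_simp; norm_num
    have step5 : ε / β / (1 - lam ^ 2) ≤ σ ^ 2 * lam ^ 2 / 18 := by linarith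
    calc _ ≤ 2 * exp 1 * (σ ^ 2 * lam ^ 2 / 18) := by gcongr
      _ = exp 1 * (σ ^ 2 * lam ^ 2 / 9) := by ring
      _ < 4 * (σ ^ 2 * lam ^ 2 / 9) := by gcongr
      _ < 4 * (σ ^ 2 * 1 / 9) := by gcongr
      _ = _ := by ring
  set q0 := 2 * exp 1 * (ε / β / (1 - lam ^ 2)) with hq0d
  have hq0n : 0 ≤ q0 := by positivity
  have hsq : sqrt q0 < 2 / 3 * σ := by
    rw [sqrt_lt' (by positivity)]; exact hq0
  obtain ⟨r, hr1, hr2⟩ := exists_between hsq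
  have hrp : 0 < r := (sqrt_nonneg _).trans_lt hr1
  have hqr : q0 < r ^ 2 := (sqrt_lt' hrp).1 hr1
  have hcont1 : Filter.Tendsto (fun η : ℝ => 1 - (1 + β) * l / (L + η)) (nhds 0)
      (nhds (1 - (1 + β) * l / (L + 0))) := by
    have : ContinuousAt (fun η : ℝ => 1 - (1 + β) * l / (L + η)) 0 := by
      have : L + (0 : ℝ) ≠ 0 := by rw [add_zero]; exact hL.ne'
      fun_prop (disch := assumption)
    exact this
  have hcont2 : Filter.Tendsto (fun η : ℝ => 2 * exp 1 * ((ε + (d + 2) * η) / β / (1 - lam ^ 2)))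
      (nhds 0) (nhds (2 * exp 1 * ((ε + (d + 2) * 0) / β / (1 - lam ^ 2)))) := by
    have : Continuous (fun η : ℝ => 2 * exp 1 * ((ε + (d + 2) * η) / β / (1 - lam ^ 2))) := by
      fun_prop
    exact this.tendsto 0
  have ev1 := hcont1.eventually_const_lt (u := r) (by
    have : 1 - (1 + β) * l / (L + 0) = 2 / 3 * σ := by rw [hβd, hσd]; field_simp; ring
    rw [this]; exact hr2)
  have ev2 := hcont2.eventually_lt_const (u := r ^ 2) (by
    rw [mul_zero, add_zero]; exact hqr)
  have ev := (ev1.and ev2).filter_mono (nhdsWithin_le_nhds (s := Set.Ioi (0 : ℝ)))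
  obtain ⟨η, ⟨hη1, hη2⟩, hηp⟩ := (ev.and self_mem_nhdsWithin).exists
  replace hηp : 0 < η := hηp
  obtain ⟨C, k0, hC, hk⟩ := F.H_asym hMlb hMub (L := L + η) (h := h - η) (by linarith) (by linarith)
  have hd0 : (0 : ℝ) ≤ d := Nat.cast_nonneg d
  have hε2 : 0 < ε + (d + 2) * η := by positivity
  have hr' : r < 1 := by linarith
  obtain ⟨t0, ht0, hb⟩ := F.block (L := L + η) (h := h - η) (β := β) (ε := ε + (d + 2) * η) (r := r)
    hC hk (by linarith) hβ (by rw [hεd]; nlinarith) hε2 hrp hη1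
  exact ⟨(ε + (d + 2) * η) / β / (1 - lam ^ 2), r, t0, by positivity, hrp, hr', hη2, ht0,
    fun t ht => F.pair hrp hr'.le ht0 hb ht⟩

end UIFS

open MeasureTheory Real
open scoped BoundedContinuousFunction
set_option linter.unusedSectionVars false

section
variable {E : Type*} [NormedAddCommGroup E] [InnerProductSpace ℝ E] [FiniteDimensional ℝ E]
  [MeasurableSpace E] [BorelSpace E]

/-- the point mass mixture -/
noncomputable def ptMix (E : Type*) [Zero E] : Mix E where
  s := {0}
  p := fun _ => 1
  pos := fun _ _ => one_pos
  sum := by simp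

lemma ptMix_meas : (ptMix E).meas = Measure.dirac 0 := by
  unfold Mix.meas ptMix
  simp

lemma triv_bound : ∃ C : ℝ, 0 < C ∧ ∀ v > 0, ∀ w > 0,
    ‖(Cop (gm (2 * v) : Measure E)) * (Cop (gm w) - 1)‖ ≤ C * (w / v) := by
  set X := ptMix E with hX
  set D := (X.H 1 - X.H (1 / 2)) / (1 - 1 / 2) with hD
  have hD0 : 0 ≤ D := div_nonneg (sub_nonneg.2 (X.H_mono (by norm_num) (by norm_num))) (by norm_num)
  have i1 := gm_prob (E := E) one_pos
  have base : ∀ w > 0, ‖(Cop (gm 1 : Measure E)) * Cop (gm 1) * (Cop (gm w) - 1)‖ ≤ D * w := by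
    intro w hw
    have i2 := gm_prob (E := E) hw
    have hphi : ∀ z, ‖Cop (gm 1 : Measure E) * (Cop (Measure.dirac z) - 1)‖ ≤ X.phi 1 z := by
      intro z
      have := X.Cop_phi one_pos z
      rwa [hX, ptMix_meas, Cop_dirac_zero, one_mul] at this
    have hq : ∫ z, X.phi 1 z ^ 2 ∂gm w ≤ 2 * w * D :=
      X.Q_bound (by norm_num) (by norm_num) hw
    have := pair_bound (gm 1 : Measure E) (gm 1) (gm w) (gm_neg w) _ _ hphi hphi
      (X.Q_integrable one_pos hw) (X.Q_integrable one_pos hw) _ hq hq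
    linarith
  refine ⟨D + 1, by positivity, fun v hv w hw => ?_⟩
  have hs : 0 < sqrt v := sqrt_pos.2 hv
  set L : E ≃L[ℝ] E := homo (sqrt v) hs.ne' with hL
  have hmap : ∀ y > 0, (gm y : Measure E).map L = gm (v * y) := by
    intro y hy
    have := gm_map (E := E) hy hs L (by
      intro x; rw [hL, homo_apply, norm_smul, norm_of_nonneg hs.le])
    rwa [sq_sqrt hv.le] at this
  have m1 := hmap 1 one_pos
  have m2 := hmap (w / v) (by positivity)
  rw [mul_one] at m1
  rw [mul_div_cancel₀ _ hv.ne'] at m2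
  have i3 := gm_prob (E := E) hv
  have i4 := gm_prob (E := E) (y := w / v) (by positivity)
  rw [two_mul, ← gm_conv hv hv, Cop_conv, ← m1, Cop_map, ← m2, Cop_map, cj_sub, cj_mul, cj_mul]
  refine (conj_norm_le _ _).trans ((base _ (by positivity)).trans ?_)
  have : 0 ≤ w / v := by positivity
  nlinarith

/-- the basic factor -/
noncomputable def Xf (v w : ℝ) : OpB E := Cop (gm (2 * v)) * (Cop (gm w) - 1)

lemma Xf_comm {v w : ℝ} (hv : 0 < v) (hw : 0 < w) (ρ : Measure E) [IsProbabilityMeasure ρ] :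
    Commute (Cop ρ) (Xf v w) := by
  have i1 := gm_prob (E := E) (y := 2 * v) (by positivity)
  have i2 := gm_prob (E := E) hw
  unfold Xf
  refine Commute.mul_right (Cop_comm _ _) (Commute.sub_right (Cop_comm _ _) (Commute.one_right _))

end

namespace UIFS
variable {d : ℕ} (F : UIFS d)

lemma Xf_conj (v w : ℝ) (hv : 0 < v) (hw : 0 < w) (K : ℕ) :
    Xf v w = compOp (F.Lk K).symm * Xf (v / (F.lam ^ K) ^ 2) (w / (F.lam ^ K) ^ 2)
      * compOp (F.Lk K) := by
  set c := F.lam ^ K with hc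
  have hcp : 0 < c := pow_pos F.lam_pos _
  have hmap : ∀ y > 0, (gm (y / c ^ 2) : Measure (EuclideanSpace ℝ (Fin d))).map (F.Lk K) = gm y := by
    intro y hy
    rw [gm_map (by positivity) hcp _ (F.Lk_norm K)]
    congr 1; field_simp
  have i1 := gm_prob (E := EuclideanSpace ℝ (Fin d)) (y := 2 * v / c ^ 2) (by positivity)
  have i2 := gm_prob (E := EuclideanSpace ℝ (Fin d)) (y := w / c ^ 2) (by positivity)
  unfold Xf
  rw [← hmap (2 * v) (by positivity), ← hmap w hw, Cop_map, Cop_map, cj_sub, cj_mul, mul_div_assoc]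

lemma ind (μ : Measure (EuclideanSpace ℝ (Fin d))) [IsProbabilityMeasure μ]
    (hss : μ = ∑ i, ENNReal.ofReal (F.p i) • Measure.map (F.S i) μ) {A r t0 : ℝ} (hA : 0 < A)
    (hr : 0 < r) (hr1 : r < 1) (ht0 : 0 < t0)
    (hp : ∀ t : ℝ, t0 ≤ r * t →
        ∃ K : ℕ, (∀ w > 0, ‖Cop (F.N K) * Cop (gm (2 * exp (-2 * t))) * (Cop (gm w) - 1)‖
          ≤ A * (w / exp (-2 * t))) ∧ r ^ 2 * t ≤ t - K * F.ell) (m : ℕ) :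
    ∀ t : ℝ, t0 ≤ r ^ (2 * m) * t → ∀ w > 0,
      ‖Cop μ * Xf (exp (-2 * t)) w ^ m‖ ≤ (A * (w / exp (-2 * t))) ^ m := by
  induction m with
  | zero =>
    intro t _ w _
    rw [pow_zero, pow_zero, mul_one]
    exact Cop_norm_le μ
  | succ m ih =>
    intro t ht w hw
    have htp : 0 < t := by
      by_contra hc
      have := mul_nonpos_of_nonneg_of_nonpos (pow_pos hr (2 * (m + 1))).le (not_lt.1 hc)
      linarith
    have hrt : t0 ≤ r * t := by
      refine ht.trans ?_
      have : r ^ (2 * (m + 1)) ≤ r ^ 1 := pow_le_pow_of_le_one hr.le hr1.le (by omega)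
      rw [pow_one] at this
      gcongr
    obtain ⟨K, hK1, hK2⟩ := hp t hrt
    have ht' : t0 ≤ r ^ (2 * m) * (t - K * F.ell) := by
      refine ht.trans ?_
      calc r ^ (2 * (m + 1)) * t = r ^ (2 * m) * (r ^ 2 * t) := by ring
        _ ≤ _ := by gcongr
    set c := F.lam ^ K with hc
    have hcp : 0 < c := pow_pos F.lam_pos _
    have hv' : exp (-2 * (t - K * F.ell)) = exp (-2 * t) / c ^ 2 := by
      rw [hc, F.lam_pow, ← exp_nat_mul, ← exp_sub]; congr 1; push_cast; ring
    have IH := ih (t - K * F.ell) ht' (w / c ^ 2) (by positivity)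
    rw [hv', div_div_div_cancel_right₀ (by positivity)] at IH
    set X := Xf (E := EuclideanSpace ℝ (Fin d)) (exp (-2 * t)) w with hX
    have hcomm : Commute (Cop (μ.map (F.Lk K))) X := Xf_comm (exp_pos _) hw _
    have e1 : Cop μ * X ^ (m + 1) = (Cop (F.N K) * X) * (Cop (μ.map (F.Lk K)) * X ^ m) := by
      conv_lhs => rw [F.mu_N μ hss K]
      rw [Cop_conv, pow_succ', mul_assoc, ← mul_assoc (Cop (μ.map _)), hcomm.eq]
      simp only [mul_assoc]
    have e2 : Cop (μ.map (F.Lk K)) * X ^ m = compOp (F.Lk K).symm *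
        (Cop μ * Xf (exp (-2 * t) / c ^ 2) (w / c ^ 2) ^ m) * compOp (F.Lk K) := by
      rw [hX, F.Xf_conj _ _ (exp_pos _) hw K, cj_pow, Cop_map, cj_mul]
    rw [e1]
    refine (norm_mul_le _ _).trans ?_
    rw [pow_succ']
    refine mul_le_mul ?_ ?_ (norm_nonneg _) (by positivity)
    · have := hK1 w hw
      rwa [mul_assoc] at this
    · rw [e2]
      exact (conj_norm_le _ _).trans IH

end UIFS

open MeasureTheory Real
open scoped BoundedContinuousFunction
set_option linter.unusedSectionVars false

lemma sum_choose_anti (s n : ℕ) :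
    ∑ pq ∈ Finset.HasAntidiagonal.antidiagonal n, (pq.1 + s).choose s = (n + s + 1).choose (s + 1) := by
  rw [Finset.Nat.sum_antidiagonal_eq_sum_range_succ (fun p _ => (p + s).choose s)]
  exact Nat.sum_range_add_choose n s

lemma ent_conv (a : ℕ → ENNReal) (f : ℕ → ENNReal) :
    ∑' p, a p * ∑' q, f (p + q) = ∑' k, (∑ pq ∈ Finset.HasAntidiagonal.antidiagonal k, a pq.1) * f k := by
  simp_rw [← ENNReal.tsum_mul_left]
  rw [← ENNReal.tsum_prod (f := fun p q => a p * f (p + q)),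
    ← Finset.HasAntidiagonal.sigmaAntidiagonalEquivProd.tsum_eq, ENNReal.tsum_sigma']
  refine tsum_congr fun k => ?_
  rw [tsum_fintype, Finset.sum_mul, ← Finset.sum_coe_sort (Finset.HasAntidiagonal.antidiagonal k)]
  refine Finset.sum_congr rfl fun x _ => ?_
  have := x.2
  rw [Finset.HasAntidiagonal.mem_antidiagonal] at this
  simp [Finset.HasAntidiagonal.sigmaAntidiagonalEquivProd_apply, this]

lemma hockey (b : ℕ → ℕ → ENNReal) (hb : ∀ j ≥ 1, ∀ n, b j n ≤ ∑' p, b (j + 1) (n + p)) (s n : ℕ) :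
    b 1 n ≤ ∑' p, ((p + s).choose s : ENNReal) * b (s + 2) (n + p) := by
  induction s with
  | zero => simpa using hb 1 le_rfl n
  | succ s ih =>
    refine ih.trans ?_
    calc _ ≤ ∑' p, ((p + s).choose s : ENNReal) * ∑' q, b (s + 3) (n + (p + q)) := by
            refine ENNReal.tsum_le_tsum fun p => ?_
            gcongr
            have := hb (s + 2) (by omega) (n + p)
            simpa only [add_assoc] using this
      _ = _ := by
            rw [ent_conv (fun p => ((p + s).choose s : ENNReal)) (fun k => b (s + 3) (n + k))]
            refine tsum_congr fun k => ?_
            rw [← Nat.cast_sum, sum_choose_anti]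
            rfl

section
variable {R : Type*} [NormedRing R]

lemma tele (T x : R) (j n : ℕ) (h0 : Filter.Tendsto (fun N => ‖T * (x ^ N * (1 - x) ^ j)‖)
    Filter.atTop (nhds 0)) :
    ENNReal.ofReal ‖T * (x ^ n * (1 - x) ^ j)‖
      ≤ ∑' p, ENNReal.ofReal ‖T * (x ^ (n + p) * (1 - x) ^ (j + 1))‖ := by
  have hid : ∀ P, T * (x ^ n * (1 - x) ^ j) = T * (x ^ (n + P) * (1 - x) ^ j)
      + ∑ p ∈ Finset.range P, T * (x ^ (n + p) * (1 - x) ^ (j + 1)) := by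
    intro P
    induction P with
    | zero => simp
    | succ P ih =>
      rw [ih, Finset.sum_range_succ, ← add_assoc, add_right_comm]
      congr 1
      rw [← mul_add, ← add_assoc, pow_succ x (n + P), pow_succ' (1 - x) j]
      congr 1
      rw [mul_assoc, ← mul_add, ← add_mul, add_sub_cancel, one_mul]
  have hle : ∀ P, ENNReal.ofReal ‖T * (x ^ n * (1 - x) ^ j)‖
      ≤ ENNReal.ofReal ‖T * (x ^ (n + P) * (1 - x) ^ j)‖
        + ∑' p, ENNReal.ofReal ‖T * (x ^ (n + p) * (1 - x) ^ (j + 1))‖ := by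
    intro P
    conv_lhs => rw [hid P]
    refine (ENNReal.ofReal_le_ofReal (norm_add_le _ _)).trans ?_
    rw [ENNReal.ofReal_add (norm_nonneg _) (norm_nonneg _)]
    gcongr
    refine (ENNReal.ofReal_le_ofReal (norm_sum_le _ _)).trans ?_
    rw [ENNReal.ofReal_sum_of_nonneg fun _ _ => norm_nonneg _]
    exact ENNReal.sum_le_tsum _
  have hlim : Filter.Tendsto (fun P => ENNReal.ofReal ‖T * (x ^ (n + P) * (1 - x) ^ j)‖
        + ∑' p, ENNReal.ofReal ‖T * (x ^ (n + p) * (1 - x) ^ (j + 1))‖) Filter.atTop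
      (nhds (0 + ∑' p, ENNReal.ofReal ‖T * (x ^ (n + p) * (1 - x) ^ (j + 1))‖)) := by
    refine Filter.Tendsto.add ?_ tendsto_const_nhds
    have h1 : Filter.Tendsto (fun P => n + P) Filter.atTop Filter.atTop :=
      Filter.tendsto_atTop_mono (fun P => Nat.le_add_left P n) Filter.tendsto_id
    have h2 := ENNReal.tendsto_ofReal (h0.comp h1)
    rw [ENNReal.ofReal_zero] at h2
    exact h2
  rw [zero_add] at hlim
  exact ge_of_tendsto' hlim hle

/-- the constant -/
noncomputable def Sc : ℝ := ∑' j : ℕ, (j : ℝ) ^ (-(3 / 2) : ℝ)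

lemma Sc_summable : Summable fun j : ℕ => (j : ℝ) ^ (-(3 / 2) : ℝ) :=
  Real.summable_nat_rpow.2 (by norm_num)

lemma Sc_nonneg : 0 ≤ Sc := tsum_nonneg fun j => rpow_nonneg (Nat.cast_nonneg j) _

lemma taylor_abs (T x : R) (s : ℕ) (B : ℝ) (hB : 0 ≤ B)
    (h0 : ∀ j ≥ 1, Filter.Tendsto (fun N => ‖T * (x ^ N * (1 - x) ^ j)‖) Filter.atTop (nhds 0))
    (hb : ∀ n : ℕ, n ≥ 1 → ‖T * (x ^ n * (1 - x) ^ (s + 2))‖ ≤ B / (n : ℝ) ^ (s + 2) * (n : ℝ) ^ (1 / 2 : ℝ)) :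
    ‖T * (x ^ (s + 2) * (1 - x) ^ 1)‖ ≤ B / (s.factorial : ℝ) * Sc := by
  have h1 := hockey (fun j n => ENNReal.ofReal ‖T * (x ^ n * (1 - x) ^ j)‖)
    (fun j hj n => tele T x j n (h0 j hj)) s (s + 2)
  have h2 : ∑' p, ((p + s).choose s : ENNReal) *
      ENNReal.ofReal ‖T * (x ^ (s + 2 + p) * (1 - x) ^ (s + 2))‖
      ≤ ∑' p : ℕ, ENNReal.ofReal (B / (s.factorial : ℝ) * ((s + 2 + p : ℕ) : ℝ) ^ (-(3 / 2) : ℝ)) := by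
    refine ENNReal.tsum_le_tsum fun p => ?_
    rw [← ENNReal.ofReal_natCast, ← ENNReal.ofReal_mul (Nat.cast_nonneg _)]
    refine ENNReal.ofReal_le_ofReal ?_
    set j := s + 2 + p with hj
    have hjp : (0 : ℝ) < j := by rw [hj]; positivity
    have c1 : ((p + s).choose s : ℝ) ≤ (j : ℝ) ^ s / (s.factorial : ℝ) := by
      refine (Nat.choose_le_pow_div s (p + s)).trans ?_
      gcongr
      norm_num [hj]; linarith
    calc _ ≤ (j : ℝ) ^ s / (s.factorial : ℝ) * (B / (j : ℝ) ^ (s + 2) * (j : ℝ) ^ (1 / 2 : ℝ)) := by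
            gcongr
            exact hb j (by omega)
      _ = B / (s.factorial : ℝ) * ((j : ℝ) ^ (1 / 2 : ℝ) / (j : ℝ) ^ 2) := by
            rw [pow_add]; field_simp
      _ = _ := by
            rw [← rpow_natCast (j : ℝ) 2, ← rpow_sub hjp]
            congr 2; norm_num
  have h3 : ∑' p : ℕ, ENNReal.ofReal (B / (s.factorial : ℝ) * ((s + 2 + p : ℕ) : ℝ) ^ (-(3 / 2) : ℝ))
      ≤ ∑' j : ℕ, ENNReal.ofReal (B / (s.factorial : ℝ) * (j : ℝ) ^ (-(3 / 2) : ℝ)) :=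
    ENNReal.tsum_comp_le_tsum_of_injective (add_right_injective (s + 2))
      (fun j : ℕ => ENNReal.ofReal (B / (s.factorial : ℝ) * (j : ℝ) ^ (-(3 / 2) : ℝ)))
  have hnn : ∀ j : ℕ, 0 ≤ B / (s.factorial : ℝ) * (j : ℝ) ^ (-(3 / 2) : ℝ) := fun j =>
    mul_nonneg (by positivity) (rpow_nonneg (Nat.cast_nonneg j) _)
  rw [← ENNReal.ofReal_tsum_of_nonneg hnn (Sc_summable.mul_left _), tsum_mul_left] at h3
  have h4 := (h1.trans h2).trans h3
  exact (ENNReal.ofReal_le_ofReal_iff (mul_nonneg (by positivity) Sc_nonneg)).1 h4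

end

open MeasureTheory Real
open scoped BoundedContinuousFunction
set_option linter.unusedSectionVars false

section
variable {E : Type*} [NormedAddCommGroup E] [InnerProductSpace ℝ E] [FiniteDimensional ℝ E]
  [MeasurableSpace E] [BorelSpace E]

lemma gm_pow {w : ℝ} (hw : 0 < w) (n : ℕ) : (Cop (gm w : Measure E)) ^ (n + 1) = Cop (gm ((n + 1 : ℕ) * w)) := by
  induction n with
  | zero => simp
  | succ n ih =>
    have i1 := gm_prob (E := E) hw
    have i2 := gm_prob (E := E) (y := (n + 1 : ℕ) * w) (by positivity)
    rw [pow_succ, ih, ← Cop_conv, gm_conv (by positivity) hw]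
    congr 2
    push_cast; ring

lemma gm_pow' {w : ℝ} (hw : 0 < w) {n : ℕ} (hn : 1 ≤ n) :
    (Cop (gm w : Measure E)) ^ n = Cop (gm (n * w)) := by
  obtain ⟨k, rfl⟩ : ∃ k, n = k + 1 := ⟨n - 1, by omega⟩
  exact gm_pow hw k

lemma one_norm_le : ‖(1 : OpB E)‖ ≤ 1 := by
  rw [← Cop_dirac_zero]; exact Cop_norm_le _

lemma gm_pow_norm (w : ℝ) (n : ℕ) : ‖(Cop (gm w : Measure E)) ^ n‖ ≤ 1 := by
  induction n with
  | zero => rw [pow_zero]; exact one_norm_le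
  | succ n ih => rw [pow_succ]; exact (norm_mul_le_right (Cop_norm_le _)).trans ih

lemma Xf_pow {v w : ℝ} (hv : 0 < v) (hw : 0 < w) {m n : ℕ} (hm : 1 ≤ m) (hn : 1 ≤ n)
    (h : (m : ℝ) * (2 * v) = n * w) (T : OpB E) :
    ‖T * Xf v w ^ m‖ = ‖T * (Cop (gm w : Measure E) ^ n * (1 - Cop (gm w)) ^ m)‖ := by
  have i2 := gm_prob (E := E) hw
  have i1 := gm_prob (E := E) (y := 2 * v) (by positivity)
  have hc : Commute (Cop (gm (2 * v) : Measure E)) (Cop (gm w) - 1) :=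
    Commute.sub_right (Cop_comm _ _) (Commute.one_right _)
  rw [Xf, hc.mul_pow, gm_pow' (by positivity) hm, gm_pow' hw hn, h, ← neg_sub (1 : OpB E), neg_pow]
  rcases neg_one_pow_eq_or (OpB E) m with e | e
  · rw [e, one_mul]
  · rw [e, neg_one_mul, mul_neg, mul_neg, norm_neg]

lemma taylor (T : OpB E) (hT : ‖T‖ ≤ 1) {A C r t0 : ℝ} (hA : 0 < A) (hC : 0 < C) (hr : 0 < r)
    (s : ℕ) (hind : ∀ t : ℝ, t0 ≤ r ^ (2 * (s + 2)) * t → ∀ w > 0,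
      ‖T * Xf (exp (-2 * t)) w ^ (s + 2)‖ ≤ (A * (w / exp (-2 * t))) ^ (s + 2))
    (htriv : ∀ v > 0, ∀ w > 0, ‖(Cop (gm (2 * v) : Measure E)) * (Cop (gm w) - 1)‖ ≤ C * (w / v))
    {Y : ℝ} (hY : 0 < Y) (hYt : t0 ≤ r ^ (2 * (s + 2)) * (-log Y / 4)) :
    ‖T * (Cop (gm Y) - Cop (gm (2 * Y)))‖ ≤ Sc * ((s + 2 : ℕ) : ℝ) ^ 3 *
      ((2 * exp 1 * A) ^ (s + 2) + (2 * exp 1 * C) ^ (s + 2) * Y ^ (1 / 4 : ℝ)) := by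
  set m := s + 2 with hm
  have hm1 : 1 ≤ m := by omega
  have hmp : (1 : ℝ) ≤ m := by exact_mod_cast hm1
  have hm0 : (0 : ℝ) < m := by linarith
  set w := Y / m with hw
  have hwp : 0 < w := by positivity
  set x := Cop (gm w : Measure E) with hx
  have hxn : ‖x‖ ≤ 1 := Cop_norm_le _
  set y4 := Y ^ (1 / 4 : ℝ) with hy4
  have hy4p : 0 < y4 := rpow_pos_of_pos hY _
  set B := (2 * (m : ℝ)) ^ m * (A ^ m + C ^ m * y4) with hB
  have hBp : 0 ≤ B := by positivity
  have hb : ∀ n : ℕ, n ≥ 1 → ‖T * (x ^ n * (1 - x) ^ m)‖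
      ≤ B / (n : ℝ) ^ m * (n : ℝ) ^ (1 / 2 : ℝ) := by
    intro n hn
    have hn1 : (1 : ℝ) ≤ n := by exact_mod_cast hn
    have hn0 : (0 : ℝ) < n := by linarith
    set v := n * w / (2 * m) with hv
    have hvp : 0 < v := by positivity
    have hwv : w / v = 2 * m / n := by rw [hv]; field_simp
    have hX := Xf_pow (E := E) hvp hwp hm1 hn (by rw [hv]; field_simp) T
    rw [← hX]
    have hnh : 1 ≤ (n : ℝ) ^ (1 / 2 : ℝ) := one_le_rpow hn1 (by norm_num)
    by_cases hcase : v ≤ sqrt Y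
    · have ht : exp (-2 * (-log v / 2)) = v := by
        rw [show -2 * (-log v / 2) = log v by ring, exp_log hvp]
      have hlog : log v ≤ log Y / 2 := by
        rw [← log_sqrt hY.le]; exact log_le_log hvp hcase
      have h1 := hind (-log v / 2) (hYt.trans (mul_le_mul_of_nonneg_left (by linarith) (by positivity))) w hwp
      rw [ht] at h1
      refine h1.trans ?_
      rw [hwv]
      calc (A * (2 * m / n)) ^ m = (2 * (m : ℝ)) ^ m * (A ^ m + 0) / (n : ℝ) ^ m * 1 := by
            rw [mul_pow, div_pow]; ring
        _ ≤ _ := by rw [hB]; gcongr; positivity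
    · have h1 : ‖T * Xf v w ^ m‖ ≤ (C * (w / v)) ^ m := by
        refine (norm_mul_le_left hT).trans ((norm_pow_le' _ (by omega)).trans ?_)
        gcongr
        exact htriv v hvp w hwp
      have h2 : 1 ≤ y4 * (n : ℝ) ^ (1 / 2 : ℝ) := by
        have hsY : 0 < sqrt Y := sqrt_pos.2 hY
        have h3 : 1 ≤ sqrt Y * n := by
          have h4 : sqrt Y < n * w / (2 * m) := not_le.1 hcase
          have h5 : n * w / (2 * m) = (sqrt Y * n) * sqrt Y / (2 * m ^ 2) := by
            rw [mul_right_comm, mul_self_sqrt hY.le, hw]; field_simp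
          rw [h5, lt_div_iff₀ (by positivity)] at h4
          have h6 : 2 * (m : ℝ) ^ 2 < sqrt Y * n := by
            by_contra hc
            have := mul_le_mul_of_nonneg_right (not_lt.1 hc) hsY.le
            linarith
          nlinarith
        have h7 : y4 = sqrt Y ^ (1 / 2 : ℝ) := by
          rw [hy4, sqrt_eq_rpow, ← rpow_mul hY.le]; norm_num
        rw [h7, ← mul_rpow hsY.le hn0.le]
        exact one_le_rpow h3 (by norm_num)
      refine h1.trans ?_
      rw [hwv]
      calc (C * (2 * m / n)) ^ m = (2 * (m : ℝ)) ^ m * (0 + C ^ m) / (n : ℝ) ^ m * 1 := by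
            rw [mul_pow, div_pow]; ring
        _ ≤ (2 * (m : ℝ)) ^ m * (0 + C ^ m) / (n : ℝ) ^ m * (y4 * (n : ℝ) ^ (1 / 2 : ℝ)) := by gcongr
        _ = (2 * (m : ℝ)) ^ m * (0 + C ^ m * y4) / (n : ℝ) ^ m * (n : ℝ) ^ (1 / 2 : ℝ) := by ring
        _ ≤ _ := by rw [hB]; gcongr; positivity
  have h0 : ∀ j ≥ 1, Filter.Tendsto (fun N => ‖T * (x ^ N * (1 - x) ^ j)‖) Filter.atTop (nhds 0) := by
    intro j hj
    obtain ⟨i, rfl⟩ : ∃ i, j = i + 1 := ⟨j - 1, by omega⟩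
    set D := ‖(1 - x) ^ i‖ with hD
    have hle : ∀ᶠ N : ℕ in Filter.atTop, ‖T * (x ^ N * (1 - x) ^ (i + 1))‖ ≤ 2 * C * D / N := by
      filter_upwards [Filter.eventually_ge_atTop 1] with N hN
      have hN0 : (0 : ℝ) < N := by exact_mod_cast hN
      have h1 := htriv (N * w / 2) (by positivity) w hwp
      rw [mul_div_cancel₀ _ (two_ne_zero), ← gm_pow' hwp hN, ← hx] at h1
      have h2 : ‖x ^ N * (1 - x)‖ ≤ C * (w / (N * w / 2)) := by
        rw [← neg_sub, mul_neg, norm_neg]; exact h1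
      refine (norm_mul_le_left hT).trans ?_
      rw [pow_succ', ← mul_assoc]
      refine (norm_mul_le _ _).trans ?_
      calc _ ≤ C * (w / (N * w / 2)) * D := by gcongr
        _ = _ := by field_simp
    refine squeeze_zero' (Filter.Eventually.of_forall fun _ => norm_nonneg _) hle ?_
    exact tendsto_const_div_atTop_nhds_zero_nat _
  have key := taylor_abs T x s B hBp h0 hb
  have hG : Cop (gm Y : Measure E) = x ^ m := by
    rw [hx, gm_pow' hwp hm1, hw, mul_div_cancel₀ _ hm0.ne']
  have hG2 : Cop (gm (2 * Y) : Measure E) = x ^ m * x ^ m := by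
    rw [← pow_add, hx, gm_pow' hwp (by omega), hw]
    congr 2
    push_cast; field_simp; norm_num
  have hfac : T * (Cop (gm Y) - Cop (gm (2 * Y)))
      = T * (x ^ m * (1 - x) ^ 1) * ∑ i ∈ Finset.range m, x ^ i := by
    rw [hG, hG2, pow_one, mul_assoc, mul_assoc (x ^ m), mul_neg_geom_sum, mul_sub (x ^ m), mul_one]
  have hsum : ‖∑ i ∈ Finset.range m, x ^ i‖ ≤ m := by
    refine (norm_sum_le _ _).trans ?_
    calc _ ≤ ∑ i ∈ Finset.range m, (1 : ℝ) := Finset.sum_le_sum fun i _ => gm_pow_norm w i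
      _ = m := by simp
  have hfact : (m : ℝ) ^ m / (s.factorial : ℝ) ≤ (m : ℝ) ^ 2 * exp 1 ^ m := by
    have h1 := pow_div_factorial_le_exp (m : ℝ) hm0.le m
    have h2 : (m.factorial : ℝ) ≤ (m : ℝ) ^ 2 * s.factorial := by
      have : m.factorial ≤ m ^ 2 * s.factorial := by
        rw [hm, Nat.factorial_succ, Nat.factorial_succ, pow_two, ← mul_assoc]
        gcongr; omega
      exact_mod_cast this
    have hs0 : (0 : ℝ) < s.factorial := by exact_mod_cast s.factorial_pos
    have hmf : (0 : ℝ) < m.factorial := by exact_mod_cast m.factorial_pos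
    rw [div_le_iff₀ hmf] at h1
    rw [div_le_iff₀ hs0, ← exp_nat_mul, mul_one]
    calc _ ≤ exp m * (m.factorial : ℝ) := h1
      _ ≤ exp m * ((m : ℝ) ^ 2 * s.factorial) := by gcongr
      _ = _ := by ring
  rw [hfac]
  refine (norm_mul_le _ _).trans ?_
  calc _ ≤ (B / (s.factorial : ℝ) * Sc) * m := by
        have := Sc_nonneg
        exact mul_le_mul key hsum (norm_nonneg _) (by positivity)
    _ = Sc * m * (((m : ℝ) ^ m / (s.factorial : ℝ)) * (2 ^ m * (A ^ m + C ^ m * y4))) := by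
        rw [hB, mul_pow]; ring
    _ ≤ Sc * m * (((m : ℝ) ^ 2 * exp 1 ^ m) * (2 ^ m * (A ^ m + C ^ m * y4))) := by
        have := Sc_nonneg
        gcongr
    _ = _ := by rw [mul_pow, mul_pow, mul_pow, mul_pow]; ring

end

open MeasureTheory Real
open scoped BoundedContinuousFunction
set_option linter.unusedSectionVars false

section
variable {E : Type*} [NormedAddCommGroup E] [InnerProductSpace ℝ E] [FiniteDimensional ℝ E]
  [MeasurableSpace E] [BorelSpace E]

lemma conv_gm_ac (μ : Measure E) [IsProbabilityMeasure μ] {y : ℝ} (hy : 0 < y) :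
    μ.conv (gm y) ≪ volume := by
  have := gm_prob (E := E) hy
  exact Measure.conv_absolutelyContinuous (withDensity_absolutelyContinuous _ _)

lemma ac_key (μ : Measure E) [IsProbabilityMeasure μ] (y : ℕ → ℝ) (hy : ∀ n, 0 < y n)
    (hlim : Filter.Tendsto y Filter.atTop (nhds 0)) (ε : ℝ) (n : ℕ)
    (h : ∀ k ≥ n, ‖Cop μ * Cop (gm (y n)) - Cop μ * Cop (gm (y k))‖ ≤ ε) (φ : E →ᵇ ℝ) :
    ∫ x, φ x ∂μ ≤ (∫ x, φ x ∂(μ.conv (gm (y n)))) + ε * ‖φ‖ := by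
  have ip := fun k => gm_prob (E := E) (hy k)
  have e : ∀ k, (Cop μ * Cop (gm (y k))).app φ 0 = ∫ x, (Cop (gm (y k))).app φ x ∂μ := by
    intro k
    rw [OpB.mul_app, Cop_apply]
    simp only [zero_add]
  have e2 : ∫ x, φ x ∂(μ.conv (gm (y n))) = (Cop μ * Cop (gm (y n))).app φ 0 := by
    rw [← Cop_conv, Cop_apply]
    simp only [zero_add]
  have hl : Filter.Tendsto (fun k => (Cop μ * Cop (gm (y k))).app φ 0) Filter.atTop
      (nhds (∫ x, φ x ∂μ)) := by
    simp only [e]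
    refine tendsto_integral_of_dominated_convergence (fun _ => ‖φ‖) ?_ (integrable_const _) ?_ ?_
    · intro k
      exact (BoundedContinuousFunction.continuous _).aestronglyMeasurable
    · intro k
      refine Filter.Eventually.of_forall fun x => ?_
      refine (OpB.app_le _ φ x).trans ?_
      have := Cop_norm_le (gm (y k) : Measure E)
      have := norm_nonneg φ
      nlinarith
    · refine Filter.Eventually.of_forall fun x => ?_
      have hw : Filter.Tendsto y Filter.atTop (nhdsWithin 0 (Set.Ioi 0)) :=
        tendsto_nhdsWithin_iff.2 ⟨hlim, Filter.Eventually.of_forall fun k => hy k⟩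
      have := (gm_tendsto φ x).comp hw
      refine this.congr fun k => ?_
      rw [Function.comp_apply, Cop_apply]
  rw [e2]
  refine le_of_tendsto hl ?_
  filter_upwards [Filter.eventually_ge_atTop n] with k hk
  have h1 := OpB.app_le (Cop μ * Cop (gm (y n)) - Cop μ * Cop (gm (y k))) φ 0
  rw [OpB.sub_app, Real.norm_eq_abs] at h1
  have h2 : ‖Cop μ * Cop (gm (y n)) - Cop μ * Cop (gm (y k))‖ * ‖φ‖ ≤ ε * ‖φ‖ := by
    gcongr; exact h k hk
  have h3 := (abs_le.1 (h1.trans h2)).1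
  linarith

lemma ac_of_cauchy (μ : Measure E) [IsProbabilityMeasure μ] (y : ℕ → ℝ) (hy : ∀ n, 0 < y n)
    (hlim : Filter.Tendsto y Filter.atTop (nhds 0))
    (hc : CauchySeq fun n => Cop μ * Cop (gm (y n))) : μ ≪ volume := by
  refine Measure.AbsolutelyContinuous.mk fun s hs h0 => ?_
  rw [hs.measure_eq_iSup_isCompact]
  simp only [ENNReal.iSup_eq_zero]
  intro K hKs hK
  have hK0 : (volume : Measure E) K = 0 := measure_mono_null hKs h0
  have hreal : μ.real K ≤ 0 := by
    refine le_of_forall_pos_le_add fun e he => ?_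
    rw [zero_add]
    obtain ⟨n, hn⟩ := Metric.cauchySeq_iff'.1 hc (e / 2) (by positivity)
    have ip := gm_prob (E := E) (hy n)
    set ν := μ.conv (gm (y n)) with hν
    have hνK : ν K = 0 := conv_gm_ac μ (hy n) hK0
    obtain ⟨U, hKU, hU, hνU⟩ := K.exists_isOpen_lt_of_lt (μ := ν) (ENNReal.ofReal (e / 2))
      (by rw [hνK]; exact ENNReal.ofReal_pos.2 (by positivity))
    obtain ⟨f, hf0, hf1, hf⟩ := exists_bounded_zero_one_of_closed hU.isClosed_compl hK.isClosed
      (Set.disjoint_compl_left_iff_subset.2 hKU)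
    have hfn : ‖f‖ ≤ 1 := by
      refine (BoundedContinuousFunction.norm_le zero_le_one).2 fun x => ?_
      rw [Real.norm_eq_abs, abs_of_nonneg (hf x).1]; exact (hf x).2
    have h1 := ac_key μ y hy hlim (e / 2) n (fun k hk => by
      have := hn k hk
      rw [dist_eq_norm, ← norm_neg, neg_sub] at this
      exact this.le) f
    have h2 : μ.real K ≤ ∫ x, f x ∂μ := by
      rw [← integral_indicator_one hK.measurableSet]
      refine integral_mono_of_nonneg (Filter.Eventually.of_forall fun x =>
        Set.indicator_nonneg (fun _ _ => zero_le_one) x) (f.integrable μ)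
        (Filter.Eventually.of_forall fun x => ?_)
      by_cases hx : x ∈ K
      · rw [Set.indicator_of_mem hx, hf1 hx]
      · rw [Set.indicator_of_notMem hx]; exact (hf x).1
    have h3 : ∫ x, f x ∂ν ≤ ν.real U := by
      rw [← integral_indicator_one hU.measurableSet]
      refine integral_mono_of_nonneg (Filter.Eventually.of_forall fun x => (hf x).1)
        ((integrable_const (1 : ℝ)).indicator hU.measurableSet)
        (Filter.Eventually.of_forall fun x => ?_)
      by_cases hx : x ∈ U
      · rw [Set.indicator_of_mem hx]; exact (hf x).2
      · rw [Set.indicator_of_notMem hx, hf0 hx]; rfl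
    have h4 : ν.real U ≤ e / 2 := by
      have := ENNReal.toReal_mono ENNReal.ofReal_ne_top hνU.le
      rwa [ENNReal.toReal_ofReal (by positivity)] at this
    nlinarith
  have h5 : μ.real K = 0 := le_antisymm hreal measureReal_nonneg
  exact (measureReal_eq_zero_iff).1 h5

end

open MeasureTheory Real
open scoped BoundedContinuousFunction
set_option linter.unusedSectionVars false

lemma sum_aux1 {q : ℝ} (hq : 0 ≤ q) (hq1 : q < 1) :
    Summable fun s : ℕ => ((s + 2 : ℕ) : ℝ) ^ 3 * q ^ (s + 2) := by
  have := summable_pow_mul_geometric_of_norm_lt_one (R := ℝ) 3 (r := q)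
    (by rw [Real.norm_eq_abs, abs_of_nonneg hq]; exact hq1)
  exact (summable_nat_add_iff 2).2 this

lemma sum_aux2 {R D t0 : ℝ} (hR : 1 < R) (hD : 0 < D) (ht : 0 < t0) :
    ∃ κ : ℝ, 0 ≤ κ ∧ ∀ m : ℕ, R ^ m * (D ^ m * exp (-(t0 * R ^ m))) ≤ κ * (1 / 2) ^ m := by
  obtain ⟨j, hj⟩ := pow_unbounded_of_one_lt (2 * R * D) hR
  have hR0 : 0 < R := by linarith
  refine ⟨j.factorial / t0 ^ j, by positivity, fun m => ?_⟩
  have h1 := pow_div_factorial_le_exp (t0 * R ^ m) (by positivity) j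
  have hf : (0 : ℝ) < j.factorial := by exact_mod_cast j.factorial_pos
  rw [exp_neg]
  have h2 : (2 * R * D) ^ m ≤ (R ^ m) ^ j := by
    rw [← pow_mul, mul_comm m j, pow_mul]
    exact pow_le_pow_left₀ (by positivity) hj.le m
  have h3 : (exp (t0 * R ^ m))⁻¹ ≤ ((t0 * R ^ m) ^ j / j.factorial)⁻¹ :=
    inv_anti₀ (by positivity) h1
  calc _ ≤ R ^ m * (D ^ m * ((t0 * R ^ m) ^ j / j.factorial)⁻¹) := by gcongr
    _ = (j.factorial / t0 ^ j) * (((2 * R * D) ^ m / (R ^ m) ^ j) * (1 / 2) ^ m) := by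
      rw [mul_pow t0, mul_pow, mul_pow, one_div, inv_pow]; field_simp
    _ ≤ (j.factorial / t0 ^ j) * (1 * (1 / 2) ^ m) := by
      gcongr
      rw [div_le_one (by positivity)]; exact h2
    _ = _ := by ring

section
variable {E : Type*} [NormedAddCommGroup E] [InnerProductSpace ℝ E] [FiniteDimensional ℝ E]
  [MeasurableSpace E] [BorelSpace E]

lemma finish (μ : Measure E) [IsProbabilityMeasure μ] {A C r t0 : ℝ} (hA : 0 < A) (hC : 0 < C)
    (hr : 0 < r) (hr1 : r < 1) (hAr : 2 * exp 1 * A < r ^ 2) (ht0 : 0 < t0)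
    (hind : ∀ m : ℕ, ∀ t : ℝ, t0 ≤ r ^ (2 * m) * t → ∀ w > 0,
      ‖Cop μ * Xf (exp (-2 * t)) w ^ m‖ ≤ (A * (w / exp (-2 * t))) ^ m)
    (htriv : ∀ v > 0, ∀ w > 0, ‖(Cop (gm (2 * v) : Measure E)) * (Cop (gm w) - 1)‖ ≤ C * (w / v)) :
    μ ≪ volume := by
  set R : ℝ := (r ^ 2)⁻¹ with hRd
  set q : ℝ := 2 * exp 1 * A with hqd
  set D : ℝ := 2 * exp 1 * C with hDd
  have hr2 : 0 < r ^ 2 := by positivity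
  have hR : 1 < R := by
    rw [hRd]; exact (one_lt_inv₀ hr2).2 (by nlinarith)
  have hR0 : 0 < R := by linarith
  have hq : 0 < q := by positivity
  have hD : 0 < D := by positivity
  have hl2 : 0 < log 2 := log_pos (by norm_num)
  have hRq : R * q < 1 := by
    rw [hRd, inv_mul_lt_iff₀ hr2, mul_one]; exact hAr
  set c : ℝ := 4 * t0 / log 2 with hcd
  have hc : 0 < c := by positivity
  set N : ℕ → ℕ := fun s => ⌈c * R ^ (s + 2)⌉₊ with hN
  have hNle : ∀ s, c * R ^ (s + 2) ≤ N s := fun s => Nat.le_ceil _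
  have hNub : ∀ s, (N s : ℝ) ≤ (c + 1) * R ^ (s + 2) := by
    intro s
    have h1 := Nat.ceil_lt_add_one (a := c * R ^ (s + 2)) (by positivity)
    have h2 : 1 ≤ R ^ (s + 2) := one_le_pow₀ hR.le
    have : (N s : ℝ) < c * R ^ (s + 2) + 1 := h1
    linarith
  have hNmono : ∀ s, N s ≤ N (s + 1) := by
    intro s
    refine Nat.ceil_mono ?_
    gcongr 1
    · exact pow_le_pow_right₀ hR.le (by omega)
  set f : ℕ → ℝ := fun s => Sc * ((s + 2 : ℕ) : ℝ) ^ 3 *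
      (q ^ (s + 2) + D ^ (s + 2) * exp (-(t0 * R ^ (s + 2)))) with hf
  set G : ℕ → OpB E := fun i => Cop μ * Cop (gm ((1 / 2 : ℝ) ^ i)) with hG
  have hstep : ∀ s i, N s ≤ i → dist (G i) (G (i + 1)) ≤ f s := by
    intro s i hi
    have hiN : c * R ^ (s + 2) ≤ i := (hNle s).trans (by exact_mod_cast hi)
    have hlog : -log ((1 / 2 : ℝ) ^ (i + 1)) = (i + 1) * log 2 := by
      rw [log_pow, one_div, log_inv]; push_cast; ring
    have hbig : t0 * R ^ (s + 2) ≤ (i + 1) * log 2 / 4 := by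
      have : t0 * R ^ (s + 2) = c * R ^ (s + 2) * (log 2 / 4) := by
        rw [hcd]; field_simp
      rw [this]
      nlinarith
    have hrR : r ^ (2 * (s + 2)) * R ^ (s + 2) = 1 := by
      rw [hRd, pow_mul, ← mul_pow, mul_inv_cancel₀ hr2.ne', one_pow]
    have h := taylor (Cop μ) (Cop_norm_le μ) hA hC hr s (hind (s + 2)) htriv
      (Y := (1 / 2 : ℝ) ^ (i + 1)) (by positivity) (by
        rw [hlog]
        calc t0 = r ^ (2 * (s + 2)) * (t0 * R ^ (s + 2)) := by
              rw [mul_left_comm, hrR, mul_one]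
          _ ≤ _ := by gcongr)
    have e2 : (2 : ℝ) * (1 / 2) ^ (i + 1) = (1 / 2) ^ i := by rw [pow_succ]; ring
    rw [e2] at h
    rw [dist_comm, dist_eq_norm, hG]
    simp only
    rw [← mul_sub]
    refine h.trans ?_
    rw [hf]
    simp only
    have h4 : ((1 / 2 : ℝ) ^ (i + 1)) ^ (1 / 4 : ℝ) ≤ exp (-(t0 * R ^ (s + 2))) := by
      rw [rpow_def_of_pos (by positivity)]
      apply exp_le_exp.2
      have : log ((1 / 2 : ℝ) ^ (i + 1)) = -((i + 1) * log 2) := by rw [← hlog, neg_neg]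
      rw [this]; linarith
    have := Sc_nonneg
    gcongr
  have hf0 : ∀ s, 0 ≤ f s := by
    intro s
    have := Sc_nonneg
    rw [hf]; positivity
  have hd : ∀ s, dist (G (N s)) (G (N (s + 1))) ≤ N (s + 1) * f s := by
    intro s
    have h := dist_le_Ico_sum_of_dist_le (f := G) (hNmono s) (d := fun _ => f s)
      (fun {k} hk _ => hstep s k hk)
    refine h.trans ?_
    rw [Finset.sum_const, Nat.card_Ico, nsmul_eq_mul]
    gcongr
    · exact hf0 s
    · exact Nat.sub_le _ _
  obtain ⟨κ, hκ, hκb⟩ := sum_aux2 hR hD ht0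
  have hsum : Summable fun s => (N (s + 1) : ℝ) * f s := by
    have hS := ((sum_aux1 (q := R * q) (by positivity) hRq).mul_left ((c + 1) * R * Sc)).add
      ((sum_aux1 (q := 1 / 2) (by norm_num) (by norm_num)).mul_left ((c + 1) * R * Sc * κ))
    refine Summable.of_nonneg_of_le (fun s => mul_nonneg (Nat.cast_nonneg _) (hf0 s)) ?_ hS
    intro s
    have hSc := Sc_nonneg
    have h1 := hκb (s + 2)
    calc (N (s + 1) : ℝ) * f s ≤ ((c + 1) * R ^ (s + 1 + 2)) * f s := by
          exact mul_le_mul_of_nonneg_right (hNub _) (hf0 s)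
      _ = (c + 1) * R * Sc * (((s + 2 : ℕ) : ℝ) ^ 3 * (R * q) ^ (s + 2))
          + (c + 1) * R * Sc * ((s + 2 : ℕ) : ℝ) ^ 3 *
            (R ^ (s + 2) * (D ^ (s + 2) * exp (-(t0 * R ^ (s + 2))))) := by
          rw [hf, mul_pow]; simp only
          rw [show s + 1 + 2 = (s + 2) + 1 by ring, pow_succ R (s + 2)]; ring
      _ ≤ (c + 1) * R * Sc * (((s + 2 : ℕ) : ℝ) ^ 3 * (R * q) ^ (s + 2))
          + (c + 1) * R * Sc * ((s + 2 : ℕ) : ℝ) ^ 3 * (κ * (1 / 2) ^ (s + 2)) := by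
          gcongr
      _ = _ := by ring
  have hNt : Filter.Tendsto N Filter.atTop Filter.atTop := by
    refine tendsto_nat_ceil_atTop.comp ?_
    refine Filter.Tendsto.const_mul_atTop hc ?_
    exact (tendsto_pow_atTop_atTop_of_one_lt hR).comp (Filter.tendsto_add_atTop_nat 2)
  refine ac_of_cauchy μ (fun s => (1 / 2 : ℝ) ^ N s) (fun s => by positivity) ?_ ?_
  · exact (tendsto_pow_atTop_nhds_zero_of_lt_one (by norm_num) (by norm_num)).comp hNt
  · exact cauchySeq_of_dist_le_of_summable _ hd hsum

end

theorem statement1 {d : ℕ} (F : UIFS d)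
    (hMlb : 1 < F.splittingRate) (hMub : F.splittingRate < ⊤)
    (hineq : ((d : ℝ) * Real.log F.splittingRate.toReal - F.garsiaEntropy) *
        Real.log F.splittingRate.toReal ^ 2 <
      1 / 27 * (Real.log F.splittingRate.toReal - Real.log F.lam⁻¹) ^ 3 * F.lam ^ 4)
    (μ : Measure (EuclideanSpace ℝ (Fin d))) (hμ : IsProbabilityMeasure μ)
    (hss : μ = ∑ i, ENNReal.ofReal (F.p i) • Measure.map (F.S i) μ) :
    μ ≪ volume := by
  haveI := hμ
  obtain ⟨A, r, t0, hA, hr, hr1, hAr, ht0, hp⟩ := F.params hMlb hMub hineq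
  obtain ⟨C, hC, htriv⟩ := triv_bound (E := EuclideanSpace ℝ (Fin d))
  exact finish μ hA hC hr hr1 hAr ht0 (F.ind μ hss hA hr hr1 ht0 hp) htriv
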